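/- Let C and C' be binary completely regular codes of length 15, each with minimum distance 5. Then C and C' are equivalent; that is, there exist a permutation σ of the 15 coordinates and a vector v ∈ F_2^15 such that C' = {(α ∘ σ⁻¹) + v : α ∈ C}. (In particular, every binary completely regular code of length 15 with minimum distance 5 is equivalent to the punctured Nordstrom-Robinson code.) -/

import Mathlib

open Set

/-- Distance from a vertex to a code in the binary Hamming space. -/
noncomputable def distToCode {m : ℕ} (C : Set (Fin m → ZMod 2)) (x : Fin m → ZMod 2) : ℕ :=
  sInf {d | ∃ c ∈ C, hammingDist x c = d}

/-- `C` has minimum distance `δ`. -/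
def IsMinDist {m : ℕ} (C : Set (Fin m → ZMod 2)) (δ : ℕ) : Prop :=
  (∀ x ∈ C, ∀ y ∈ C, x ≠ y → δ ≤ hammingDist x y) ∧
  ∃ x ∈ C, ∃ y ∈ C, x ≠ y ∧ hammingDist x y = δ

/-- `C` is completely regular: the number of codewords at distance `k` from `γ`
depends only on `distToCode C γ` and `k`. -/
def IsCompletelyRegular {m : ℕ} (C : Set (Fin m → ZMod 2)) : Prop :=
  ∀ γ γ' : Fin m → ZMod 2, distToCode C γ = distToCode C γ' →
    ∀ k : ℕ, {c ∈ C | hammingDist γ c = k}.ncard = {c ∈ C | hammingDist γ' c = k}.ncard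


namespace NR

abbrev V := Fin 15 → ZMod 2

/-- sign of a bit -/
def sg (a : ZMod 2) : ℤ := if a = 0 then 1 else -1

lemma sg_add (a b : ZMod 2) : sg (a + b) = sg a * sg b := by
  revert a b; decide
lemma sg_zero : sg 0 = 1 := by decide
lemma sg_one : sg 1 = -1 := by decide
lemma sg_sq (a : ZMod 2) : sg a * sg a = 1 := by
  revert a; decide
lemma z2 (a : ZMod 2) : a + a = 0 := by
  revert a; decide
lemma sg_sum {ι : Type*} (s : Finset ι) (f : ι → ZMod 2) :
    sg (∑ i ∈ s, f i) = ∏ i ∈ s, sg (f i) := by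
  classical
  induction s using Finset.induction_on with
  | empty => simp [sg_zero]
  | insert a s ha ih => rw [Finset.sum_insert ha, Finset.prod_insert ha, sg_add, ih]

lemma v2 (a : V) : a + a = 0 := by
  funext i; exact z2 _
lemma vneg (a : V) : -a = a := by
  rw [neg_eq_iff_add_eq_zero]; exact v2 a

def e (i : Fin 15) : V := Pi.single i 1
def one : V := fun _ => 1
/-- Hamming weight -/
def wt (v : V) : ℕ := hammingNorm v

lemma dist_eq (x y : V) : hammingDist x y = wt (x + y) := by
  rw [hammingDist_eq_hammingNorm, vneg]; rfl

def theta (u : V) : ℤ := ∑ i, sg (u i)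

lemma theta_wt (u : V) : theta u = 15 - 2 * (wt u : ℤ) := by
  have h : ∀ i, sg (u i) = 1 - 2 * (if u i ≠ 0 then 1 else 0) := by
    intro i; unfold sg; split_ifs <;> simp_all
  unfold theta wt hammingNorm
  simp only [h, Finset.sum_sub_distrib, ← Finset.mul_sum, Finset.sum_boole]
  simp

lemma wt_le (u : V) : wt u ≤ 15 := by
  have := hammingNorm_le_card_fintype (x := u)
  simpa [wt] using this

lemma theta_add_e (u : V) (i : Fin 15) : theta (u + e i) = theta u - 2 * sg (u i) := by
  unfold theta
  rw [← Finset.add_sum_erase _ _ (Finset.mem_univ i), ← Finset.add_sum_erase (a := i) _ (fun j => sg (u j)) (Finset.mem_univ i)]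
  have h1 : ∑ j ∈ Finset.univ.erase i, sg ((u + e i) j) = ∑ j ∈ Finset.univ.erase i, sg (u j) := by
    apply Finset.sum_congr rfl
    intro j hj
    have : j ≠ i := (Finset.mem_erase.1 hj).1
    simp [e, this]
  rw [h1]
  have : sg ((u + e i) i) = - sg (u i) := by
    simp [e, sg_add, sg_one]
  rw [this]; ring

lemma wt_add_e (u : V) (i : Fin 15) :
    (u i = 0 → wt (u + e i) = wt u + 1) ∧ (u i ≠ 0 → wt (u + e i) + 1 = wt u) := by
  have h := theta_add_e u i
  rw [theta_wt, theta_wt] at h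
  constructor
  · intro h0; simp [h0, sg_zero] at h; omega
  · intro h0
    have : sg (u i) = -1 := by simp [sg, h0]
    rw [this] at h; omega

lemma card_supp (u : V) : (Finset.univ.filter (fun i => u i ≠ 0)).card = wt u := rfl
lemma card_cosupp (u : V) : (Finset.univ.filter (fun i => u i = 0)).card + wt u = 15 := by
  rw [← card_supp]
  have := Finset.card_filter_add_card_filter_not (s := (Finset.univ : Finset (Fin 15))) (fun i => u i = 0)
  simpa using this

lemma count_zero (u : V) :
    (Finset.univ.filter (fun i => wt (u + e i) = 0)).card = if wt u = 1 then 1 else 0 := by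
  split_ifs with h
  · rw [show (1:ℕ) = wt u by omega, ← card_supp]
    congr 1; ext i
    have := wt_add_e u i
    simp only [Finset.mem_filter, Finset.mem_univ, true_and]
    by_cases h0 : u i = 0
    · have := this.1 h0; simp [h0]; omega
    · have := this.2 h0; simp [h0]; omega
  · rw [Finset.card_eq_zero, Finset.filter_eq_empty_iff]
    intro i _ hi
    have := wt_add_e u i
    by_cases h0 : u i = 0
    · have := this.1 h0; omega
    · have := this.2 h0; omega

lemma count_succ (u : V) (k : ℕ) :
    (Finset.univ.filter (fun i => wt (u + e i) = k + 1)).card =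
      (if wt u = k + 2 then k + 2 else 0) + (if wt u = k then 15 - k else 0) := by
  by_cases h : wt u = k + 2
  · rw [if_pos h, if_neg (by omega), ← h, ← card_supp]
    congr 1; ext i
    have := wt_add_e u i
    simp only [Finset.mem_filter, Finset.mem_univ, true_and]
    by_cases h0 : u i = 0
    · have := this.1 h0; simp [h0]; omega
    · have := this.2 h0; simp [h0]; omega
  · by_cases h' : wt u = k
    · rw [if_neg h, if_pos h']
      have h2 := card_cosupp u
      rw [show 0 + (15 - k) = (Finset.univ.filter (fun i => u i = 0)).card by omega]
      congr 1; ext i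
      have := wt_add_e u i
      simp only [Finset.mem_filter, Finset.mem_univ, true_and]
      by_cases h0 : u i = 0
      · have := this.1 h0; simp [h0]; omega
      · have := this.2 h0; simp [h0]; omega
    · rw [if_neg h, if_neg h', Finset.card_eq_zero, Finset.filter_eq_empty_iff]
      intro i _ hi
      have := wt_add_e u i
      by_cases h0 : u i = 0
      · have := this.1 h0; omega
      · have := this.2 h0; omega

/-- number of codewords at distance `k` -/
def N (F : Finset V) (k : ℕ) (x : V) : ℕ := (F.filter (fun c => wt (x + c) = k)).card

lemma N_eq (F : Finset V) (k : ℕ) (x : V) : N F k x = ∑ c ∈ F, if wt (x + c) = k then 1 else 0 := by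
  simp [N]

lemma sum_N (F : Finset V) (k : ℕ) (x : V) :
    ∑ i, N F k (x + e i) = ∑ c ∈ F, (Finset.univ.filter (fun i => wt (x + c + e i) = k)).card := by
  simp only [N_eq]
  rw [Finset.sum_comm]
  apply Finset.sum_congr rfl
  intro c _
  rw [Finset.card_filter]
  apply Finset.sum_congr rfl
  intro i _
  rw [add_right_comm]

lemma rec_zero (F : Finset V) (x : V) : ∑ i, N F 0 (x + e i) = N F 1 x := by
  rw [sum_N, N_eq]
  exact Finset.sum_congr rfl (fun c _ => count_zero _)

lemma rec_succ (F : Finset V) (k : ℕ) (x : V) :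
    ∑ i, N F (k + 1) (x + e i) = (k + 2) * N F (k + 2) x + (15 - k) * N F k x := by
  rw [sum_N, N_eq, N_eq, Finset.mul_sum, Finset.mul_sum, ← Finset.sum_add_distrib]
  apply Finset.sum_congr rfl
  intro c _
  rw [count_succ]; simp

structure CR (F : Finset V) (D : V → ℕ) : Prop where
  hmin : ∀ x ∈ F, ∀ y ∈ F, x ≠ y → 5 ≤ wt (x + y)
  hex : ∃ x ∈ F, ∃ y ∈ F, wt (x + y) = 5
  hreg : ∀ x y, D x = D y → ∀ k, N F k x = N F k y
  hD : ∀ x, ∃ c ∈ F, wt (x + c) = D x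
  hD' : ∀ x, ∀ c ∈ F, D x ≤ wt (x + c)

lemma wt_tri (x y : V) : wt (x + y) ≤ wt x + wt y := by
  rw [← dist_eq]
  have h := hammingDist_triangle x 0 y
  rwa [hammingDist_zero_right, hammingDist_zero_left] at h

end NR

namespace NR
namespace CR
variable {F : Finset V} {D : V → ℕ}

lemma D_zero (h : CR F D) {c : V} (hc : c ∈ F) : D c = 0 := by
  have := h.hD' c c hc
  rw [v2] at this
  simpa [wt] using this

lemma N_lt (h : CR F D) (x : V) (k : ℕ) (hk : k < D x) : N F k x = 0 := by
  unfold N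
  rw [Finset.card_eq_zero, Finset.filter_eq_empty_iff]
  intro c hc hh
  have := h.hD' x c hc
  omega

lemma N_pos (h : CR F D) (x : V) : 1 ≤ N F (D x) x := by
  obtain ⟨c, hc, hw⟩ := h.hD x
  exact Finset.card_pos.2 ⟨c, Finset.mem_filter.2 ⟨hc, hw⟩⟩

lemma eq_of_close (h : CR F D) (x : V) {c d : V} (hc : c ∈ F) (hd : d ∈ F)
    (hs : wt (x + c) + wt (x + d) < 5) : c = d := by
  by_contra hne
  have h1 := h.hmin c hc d hd hne
  have h2 := wt_tri (x + c) (x + d)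
  have h3 : x + c + (x + d) = c + d := by
    have := v2 x
    calc x + c + (x + d) = (x + x) + (c + d) := by abel
      _ = c + d := by rw [this, zero_add]
  rw [h3] at h2
  omega

lemma N_one (h : CR F D) (x : V) (hk : D x ≤ 2) : N F (D x) x = 1 := by
  apply le_antisymm _ (h.N_pos x)
  unfold N
  rw [Finset.card_le_one]
  intro a ha b hb
  rw [Finset.mem_filter] at ha hb
  exact h.eq_of_close x ha.1 hb.1 (by omega)

lemma N_zero (h : CR F D) (x : V) (k : ℕ) (hk : k + D x < 5) (hne : k ≠ D x) : N F k x = 0 := by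
  unfold N
  rw [Finset.card_eq_zero, Finset.filter_eq_empty_iff]
  intro c hc hh
  obtain ⟨d, hd, hw⟩ := h.hD x
  have := h.eq_of_close x hc hd (by omega)
  subst this; omega

lemma D_nbr (h : CR F D) (x : V) (i : Fin 15) : D (x + e i) ≤ D x + 1 := by
  obtain ⟨c, hc, hw⟩ := h.hD x
  have h1 := h.hD' (x + e i) c hc
  have h2 := wt_add_e (x + c) i
  rw [add_right_comm] at h1
  by_cases h0 : (x + c) i = 0
  · have := h2.1 h0; omega
  · have := h2.2 h0; omega

lemma D_nbr' (h : CR F D) (x : V) (i : Fin 15) : D x ≤ D (x + e i) + 1 := by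
  have := h.D_nbr (x + e i) i
  rwa [add_assoc, v2, add_zero] at this

/-- number of neighbours in class `j` -/
def q (D : V → ℕ) (x : V) (j : ℕ) : ℕ := (Finset.univ.filter (fun i => D (x + e i) = j)).card

lemma q_pos {x : V} {j : ℕ} (hq : q D x j ≠ 0) : ∃ y, D y = j := by
  obtain ⟨i, hi⟩ := Finset.card_ne_zero.1 hq
  exact ⟨_, (Finset.mem_filter.1 hi).2⟩

lemma sum_q (h : CR F D) (x : V) (hx : D x ≤ 3) :
    q D x 0 + q D x 1 + q D x 2 + q D x 3 + q D x 4 = 15 := by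
  have := Finset.card_eq_sum_card_fiberwise (s := (Finset.univ : Finset (Fin 15)))
    (t := Finset.range 5) (f := fun i => D (x + e i)) (by
      intro i _
      have := h.D_nbr x i
      simp; omega)
  simp [Finset.sum_range_succ] at this
  unfold q
  omega

lemma q_zero (h : CR F D) (x : V) (j : ℕ) (hj : j + 1 < D x ∨ D x + 1 < j) : q D x j = 0 := by
  unfold q
  rw [Finset.card_eq_zero, Finset.filter_eq_empty_iff]
  intro i _ hh
  have := h.D_nbr x i
  have := h.D_nbr' x i
  omega

open Classical in
/-- the number of codewords at distance k from class j -/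
noncomputable def n (F : Finset V) (D : V → ℕ) (j k : ℕ) : ℕ :=
  if h : ∃ x, D x = j then N F k h.choose else 0

lemma N_eq_n (h : CR F D) (x : V) (k : ℕ) : N F k x = n F D (D x) k := by
  have hx : ∃ y, D y = D x := ⟨x, rfl⟩
  unfold n
  rw [dif_pos hx]
  exact h.hreg _ _ hx.choose_spec.symm k

lemma sum_n (h : CR F D) (x : V) (hx : D x ≤ 3) (k : ℕ) :
    ∑ i, N F k (x + e i) = q D x 0 * n F D 0 k + q D x 1 * n F D 1 k + q D x 2 * n F D 2 k
      + q D x 3 * n F D 3 k + q D x 4 * n F D 4 k := by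
  have h1 : ∀ i, N F k (x + e i) = ∑ j ∈ Finset.range 5, if D (x + e i) = j then n F D j k else 0 := by
    intro i
    rw [h.N_eq_n, Finset.sum_ite_eq, if_pos]
    have := h.D_nbr x i
    simp; omega
  simp only [h1]
  rw [Finset.sum_comm]
  have h2 : ∀ j, (∑ i, if D (x + e i) = j then n F D j k else 0) = q D x j * n F D j k := by
    intro j
    rw [← Finset.sum_filter, Finset.sum_const, smul_eq_mul]; rfl
  simp only [h2, Finset.sum_range_succ, Finset.sum_range_zero, zero_add]

lemma rec0 (h : CR F D) (x : V) (j : ℕ) (hx : D x = j) (hj : j ≤ 3) :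
    q D x 0 * n F D 0 0 + q D x 1 * n F D 1 0 + q D x 2 * n F D 2 0
      + q D x 3 * n F D 3 0 + q D x 4 * n F D 4 0 = n F D j 1 := by
  rw [← h.sum_n x (by omega), rec_zero, h.N_eq_n, hx]

lemma recS (h : CR F D) (x : V) (j : ℕ) (hx : D x = j) (hj : j ≤ 3) (k : ℕ) :
    q D x 0 * n F D 0 (k+1) + q D x 1 * n F D 1 (k+1) + q D x 2 * n F D 2 (k+1)
      + q D x 3 * n F D 3 (k+1) + q D x 4 * n F D 4 (k+1)
      = (k + 2) * n F D j (k + 2) + (15 - k) * n F D j k := by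
  rw [← h.sum_n x (by omega), rec_succ, h.N_eq_n, h.N_eq_n, hx]

lemma n_lt (h : CR F D) (j k : ℕ) (hk : k < j) : n F D j k = 0 := by
  by_cases hx : ∃ x, D x = j
  · obtain ⟨x, hx⟩ := hx
    rw [← hx, ← h.N_eq_n]; exact h.N_lt x k (by omega)
  · unfold n; rw [dif_neg hx]

lemma n_one (h : CR F D) (j : ℕ) (hk : j ≤ 2) (hx : ∃ x, D x = j) : n F D j j = 1 := by
  obtain ⟨x, hx⟩ := hx
  have := h.N_one x (by omega)
  rwa [h.N_eq_n, hx] at this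

lemma n_zero (h : CR F D) (j k : ℕ) (hk : k + j < 5) (hne : k ≠ j) : n F D j k = 0 := by
  by_cases hx : ∃ x, D x = j
  · obtain ⟨x, hx⟩ := hx
    rw [← hx, ← h.N_eq_n]; exact h.N_zero x k (by omega) (by omega)
  · unfold n; rw [dif_neg hx]

/-- The quotient matrix of the distance partition and its consequences. -/
lemma params (h : CR F D) :
    (∃ x0 x1 x2 x3, D x0 = 0 ∧ D x1 = 1 ∧ D x2 = 2 ∧ D x3 = 3 ∧
      (q D x0 0 = 0 ∧ q D x0 1 = 15 ∧ q D x0 2 = 0 ∧ q D x0 3 = 0 ∧ q D x0 4 = 0) ∧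
      (q D x1 0 = 1 ∧ q D x1 1 = 0 ∧ q D x1 2 = 14 ∧ q D x1 3 = 0 ∧ q D x1 4 = 0) ∧
      (q D x2 0 = 0 ∧ q D x2 1 = 2 ∧ q D x2 2 = 12 ∧ q D x2 3 = 1 ∧ q D x2 4 = 0)) ∧
      n F D 2 3 = 4 ∧ n F D 3 3 = 5 ∧ ∀ x, D x = 3 →
      (q D x 0 = 0 ∧ q D x 1 = 0 ∧ q D x 2 = 15 ∧ q D x 3 = 0 ∧ q D x 4 = 0) := by
  obtain ⟨c, hc, d, hd, hcd⟩ := h.hex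
  have hx0 := h.D_zero hc
  have n01 := h.n_zero 0 1 (by omega) (by omega)
  have n02 := h.n_zero 0 2 (by omega) (by omega)
  have n03 := h.n_zero 0 3 (by omega) (by omega)
  have n04 := h.n_zero 0 4 (by omega) (by omega)
  have n10 := h.n_zero 1 0 (by omega) (by omega)
  have n12 := h.n_zero 1 2 (by omega) (by omega)
  have n13 := h.n_zero 1 3 (by omega) (by omega)
  have n20 := h.n_zero 2 0 (by omega) (by omega)
  have n21 := h.n_zero 2 1 (by omega) (by omega)
  have n30 := h.n_zero 3 0 (by omega) (by omega)
  have n31 := h.n_zero 3 1 (by omega) (by omega)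
  have n32 := h.n_lt 3 2 (by omega)
  have n40 := h.n_lt 4 0 (by omega)
  have n41 := h.n_lt 4 1 (by omega)
  have n42 := h.n_lt 4 2 (by omega)
  have n43 := h.n_lt 4 3 (by omega)
  have n00 := h.n_one 0 (by omega) ⟨c, hx0⟩
  have n05 : 1 ≤ n F D 0 5 := by
    rw [← hx0, ← h.N_eq_n]
    exact Finset.card_pos.2 ⟨d, Finset.mem_filter.2 ⟨hd, hcd⟩⟩
  -- class 0
  have a1 := h.sum_q c (by omega)
  have a2 := h.q_zero c 2 (by omega)
  have a3 := h.q_zero c 3 (by omega)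
  have a4 := h.q_zero c 4 (by omega)
  have a5 := h.rec0 c 0 hx0 (by omega)
  simp only [n00, n01, n10, n20, n30, n40] at a5
  have a6 : q D c 0 = 0 := by omega
  have a7 : q D c 1 = 15 := by omega
  obtain ⟨x1, hx1⟩ := q_pos (x := c) (j := 1) (D := D) (by omega)
  have n11 := h.n_one 1 (by omega) ⟨x1, hx1⟩
  -- class 1
  have b1 := h.sum_q x1 (by omega)
  have b3 := h.q_zero x1 3 (by omega)
  have b4 := h.q_zero x1 4 (by omega)
  have b5 := h.rec0 x1 1 hx1 (by omega)
  have b6 := h.recS x1 1 hx1 (by omega) 0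
  simp only [n00, n01, n10, n20, n30, n40, n11] at b5
  simp only [zero_add, n01, n11, n21, n31, n41, n12, n10] at b6
  have b7 : q D x1 0 = 1 := by omega
  have b8 : q D x1 1 = 0 := by omega
  have b9 : q D x1 2 = 14 := by omega
  obtain ⟨x2, hx2⟩ := q_pos (x := x1) (j := 2) (D := D) (by omega)
  have n22 := h.n_one 2 (by omega) ⟨x2, hx2⟩
  -- class 2
  have c1 := h.sum_q x2 (by omega)
  have c2 := h.q_zero x2 0 (by omega)
  have c3 := h.q_zero x2 4 (by omega)
  have c4 := h.recS x2 2 hx2 (by omega) 0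
  have c5 := h.recS x2 2 hx2 (by omega) 1
  simp only [zero_add, n01, n11, n21, n31, n41, n22, n20] at c4
  simp only [Nat.reduceAdd, n02, n12, n22, n32, n42, n21] at c5
  have c6 : q D x2 1 = 2 := by omega
  have c7 : q D x2 2 = 3 * n F D 2 3 := by omega
  -- design equations
  have d1 := h.recS c 0 hx0 (by omega) 3
  have d2 := h.recS x1 1 hx1 (by omega) 2
  have d3 := h.recS c 0 hx0 (by omega) 4
  have d4 := h.recS x1 1 hx1 (by omega) 3
  have d5 := h.recS x2 2 hx2 (by omega) 2
  have d6 := h.recS c 0 hx0 (by omega) 5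
  have d7 := h.recS x1 1 hx1 (by omega) 4
  have d8 := h.recS x2 2 hx2 (by omega) 3
  simp only [Nat.reduceAdd, a2, a3, a4, a6, a7, n04, n03, zero_mul] at d1 d3 d6
  simp only [Nat.reduceAdd, b3, b4, b7, b8, b9, n03, n04, n12, n13, zero_mul] at d2 d4 d7
  have lam : n F D 2 3 = 2 ∨ n F D 2 3 = 4 := by omega
  have hq3 : q D x2 3 ≠ 0 := by omega
  obtain ⟨x3, hx3⟩ := q_pos (x := x2) (j := 3) (D := D) hq3
  have hm : 1 ≤ n F D 3 3 := by
    have := h.N_pos x3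
    rwa [h.N_eq_n, hx3] at this
  -- class 3
  have cls3 : ∀ y, D y = 3 → q D y 0 = 0 ∧ q D y 1 = 0 ∧ q D y 2 = 3 * n F D 3 3 ∧
      q D y 2 + q D y 3 + q D y 4 = 15 := by
    intro y hy
    have e1 := h.sum_q y (by omega)
    have e2 := h.q_zero y 0 (by omega)
    have e3 := h.q_zero y 1 (by omega)
    have e4 := h.recS y 3 hy (by omega) 1
    simp only [Nat.reduceAdd, n02, n12, n22, n32, n42, n31] at e4
    omega
  have f1 := h.recS x3 3 hx3 (by omega) 2
  obtain ⟨f2, f3, f4, f5⟩ := cls3 x3 hx3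
  simp only [Nat.reduceAdd, f2, f3, f4, n43, n32] at f1
  rcases lam with lam | lam
  · exfalso
    have hq33 : q D x2 3 = 7 := by omega
    have hq22 : q D x2 2 = 6 := by omega
    simp only [Nat.reduceAdd, c2, c3, c6, hq33, hq22, lam, n13, n22] at d5 d8
    have hm3 : n F D 3 3 = 3 := by omega
    rw [hm3, lam] at f1
    rw [hm3] at f4 d5
    omega
  · have hq33 : q D x2 3 = 1 := by omega
    have hq22 : q D x2 2 = 12 := by omega
    simp only [Nat.reduceAdd, c2, c3, c6, hq33, hq22, lam, n13, n22] at d5 d8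
    have hm3 : n F D 3 3 = 1 ∨ n F D 3 3 = 5 := by omega
    rcases hm3 with hm3 | hm3
    · exfalso
      rw [hm3, lam] at f1
      rw [hm3] at f4 d5
      omega
    · refine ⟨⟨c, x1, x2, x3, hx0, hx1, hx2, hx3, ⟨a6, a7, a2, a3, a4⟩, ⟨b7, b8, b9, b3, b4⟩,
        ⟨c2, c6, hq22, hq33, c3⟩⟩, lam, hm3, ?_⟩
      intro y hy
      have := cls3 y hy
      omega

end CR
end NR

namespace NR
namespace CR
variable {F : Finset V} {D : V → ℕ}

lemma wt_eq_zero {v : V} : wt v = 0 ↔ v = 0 := hammingNorm_eq_zero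

lemma D_le (h : CR F D) : ∀ x, D x ≤ 3 := by
  have hp := h.params.2.2.2
  have key : ∀ m : ℕ, ∀ y, D y = m + 4 → False := by
    intro m
    induction m with
    | zero =>
      intro y hy
      obtain ⟨c, hc, hw⟩ := h.hD y
      have hne : y + c ≠ 0 := by
        intro h0; rw [h0] at hw
        have : wt (0 : V) = 0 := wt_eq_zero.2 rfl
        omega
      obtain ⟨i, hi⟩ := Function.ne_iff.1 hne
      have h1 := (wt_add_e (y + c) i).2 hi
      have h2 := h.hD' (y + e i) c hc
      rw [add_right_comm] at h2
      have h3 := h.D_nbr' y i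
      have h4 := (hp (y + e i) (by omega)).2.2.2.2
      unfold q at h4
      rw [Finset.card_eq_zero, Finset.filter_eq_empty_iff] at h4
      apply h4 (Finset.mem_univ i)
      rw [add_assoc, v2, add_zero]; exact hy
    | succ m ih =>
      intro y hy
      obtain ⟨c, hc, hw⟩ := h.hD y
      have hne : y + c ≠ 0 := by
        intro h0; rw [h0] at hw
        have : wt (0 : V) = 0 := wt_eq_zero.2 rfl
        omega
      obtain ⟨i, hi⟩ := Function.ne_iff.1 hne
      have h1 := (wt_add_e (y + c) i).2 hi
      have h2 := h.hD' (y + e i) c hc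
      rw [add_right_comm] at h2
      have h3 := h.D_nbr' y i
      exact ih (y + e i) (by omega)
  intro x
  by_contra hx
  exact key (D x - 4) x (by omega)

lemma packing (h : CR F D) (x : V) : N F 3 x + N F 2 x + 5 * N F 1 x + 5 * N F 0 x = 5 := by
  have h3 := h.D_le x
  obtain ⟨-, l, m, -⟩ := h.params
  have n3 := h.N_eq_n x 3
  have a := h.N_lt x
  have b := h.N_one x
  have c := h.N_zero x
  have hD : D x = 0 ∨ D x = 1 ∨ D x = 2 ∨ D x = 3 := by omega
  rcases hD with hD | hD | hD | hD <;> rw [hD] at n3 a b c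
  · rw [b (by omega), c 1 (by omega) (by omega), c 2 (by omega) (by omega), c 3 (by omega) (by omega)]
  · rw [b (by omega), c 0 (by omega) (by omega), c 2 (by omega) (by omega), c 3 (by omega) (by omega)]
  · rw [b (by omega), c 0 (by omega) (by omega), c 1 (by omega) (by omega), n3, l]
  · rw [c 0 (by omega) (by omega), c 1 (by omega) (by omega), a 2 (by omega), n3, m]

lemma distr (h : CR F D) :
    n F D 0 11 = 0 ∧ n F D 0 12 = 0 ∧ n F D 0 13 = 0 ∧ n F D 0 14 = 0 ∧ n F D 0 15 = 1 := by
  obtain ⟨⟨x0, x1, x2, x3, hx0, hx1, hx2, hx3, ⟨a0, a1, a2, a3, a4⟩, ⟨b0, b1, b2, b3, b4⟩,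
    ⟨c0, c1, c2, c3, c4⟩⟩, l, m, hd⟩ := h.params
  obtain ⟨d0, d1, d2, d3, d4⟩ := hd x3 hx3
  have step : ∀ k : ℕ, ∀ p0 p1 p2 p3 r0 r1 r2 r3 : ℕ,
      (n F D 0 k = p0 ∧ n F D 1 k = p1 ∧ n F D 2 k = p2 ∧ n F D 3 k = p3) →
      (n F D 0 (k+1) = r0 ∧ n F D 1 (k+1) = r1 ∧ n F D 2 (k+1) = r2 ∧ n F D 3 (k+1) = r3) →
      ∀ s0 s1 s2 s3 : ℕ,
      (15 * r1 = (k + 2) * s0 + (15 - k) * p0 ∧ r0 + 14 * r2 = (k + 2) * s1 + (15 - k) * p1 ∧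
        2 * r1 + 12 * r2 + r3 = (k + 2) * s2 + (15 - k) * p2 ∧
        15 * r2 = (k + 2) * s3 + (15 - k) * p3) →
      (n F D 0 (k+2) = s0 ∧ n F D 1 (k+2) = s1 ∧ n F D 2 (k+2) = s2 ∧ n F D 3 (k+2) = s3) := by
    rintro k p0 p1 p2 p3 r0 r1 r2 r3 ⟨e0, e1, e2, e3⟩ ⟨f0, f1, f2, f3⟩ s0 s1 s2 s3 ⟨g0, g1, g2, g3⟩
    have y0 := h.recS x0 0 hx0 (by omega) k
    have y1 := h.recS x1 1 hx1 (by omega) k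
    have y2 := h.recS x2 2 hx2 (by omega) k
    have y3 := h.recS x3 3 hx3 (by omega) k
    simp only [a0, a1, a2, a3, a4, e0, f1] at y0
    simp only [b0, b1, b2, b3, b4, e1, f0, f2] at y1
    simp only [c0, c1, c2, c3, c4, e2, f1, f2, f3] at y2
    simp only [d0, d1, d2, d3, d4, e3, f2] at y3
    have hk : 0 < k + 2 := by omega
    refine ⟨?_, ?_, ?_, ?_⟩ <;> apply Nat.eq_of_mul_eq_mul_left hk <;> omega
  have l0 : n F D 0 0 = 1 ∧ n F D 1 0 = 0 ∧ n F D 2 0 = 0 ∧ n F D 3 0 = 0 :=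
    ⟨h.n_one 0 (by omega) ⟨x0, hx0⟩, h.n_lt _ _ (by omega), h.n_lt _ _ (by omega),
      h.n_lt _ _ (by omega)⟩
  have l1 : n F D 0 1 = 0 ∧ n F D 1 1 = 1 ∧ n F D 2 1 = 0 ∧ n F D 3 1 = 0 :=
    ⟨h.n_zero 0 1 (by omega) (by omega), h.n_one 1 (by omega) ⟨x1, hx1⟩, h.n_lt _ _ (by omega),
      h.n_lt _ _ (by omega)⟩
  have l2 := step 0 _ _ _ _ _ _ _ _ l0 l1 0 0 1 0 (by norm_num)
  have l3 := step 1 _ _ _ _ _ _ _ _ l1 l2 0 0 4 5 (by norm_num)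
  have l4 := step 2 _ _ _ _ _ _ _ _ l2 l3 0 14 10 15 (by norm_num)
  have l5 := step 3 _ _ _ _ _ _ _ _ l3 l4 42 28 23 18 (by norm_num)
  have l6 := step 4 _ _ _ _ _ _ _ _ l4 l5 70 35 40 30 (by norm_num)
  have l7 := step 5 _ _ _ _ _ _ _ _ l5 l6 15 50 50 60 (by norm_num)
  have l8 := step 6 _ _ _ _ _ _ _ _ l6 l7 15 50 50 60 (by norm_num)
  have l9 := step 7 _ _ _ _ _ _ _ _ l7 l8 70 35 40 30 (by norm_num)
  have l10 := step 8 _ _ _ _ _ _ _ _ l8 l9 42 28 23 18 (by norm_num)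
  have l11 := step 9 _ _ _ _ _ _ _ _ l9 l10 0 14 10 15 (by norm_num)
  have l12 := step 10 _ _ _ _ _ _ _ _ l10 l11 0 0 4 5 (by norm_num)
  have l13 := step 11 _ _ _ _ _ _ _ _ l11 l12 0 0 1 0 (by norm_num)
  have l14 := step 12 _ _ _ _ _ _ _ _ l12 l13 0 1 0 0 (by norm_num)
  have l15 := step 13 _ _ _ _ _ _ _ _ l13 l14 1 0 0 0 (by norm_num)
  exact ⟨l11.1, l12.1, l13.1, l14.1, l15.1⟩

end CR

lemma wt_one_iff {v : V} : wt v = 15 ↔ v = one := by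
  constructor
  · intro h
    have h1 := card_cosupp v
    have h2 : (Finset.univ.filter (fun i => v i = 0)).card = 0 := by omega
    rw [Finset.card_eq_zero, Finset.filter_eq_empty_iff] at h2
    funext i
    have := h2 (Finset.mem_univ i)
    revert this
    show ¬ v i = 0 → v i = 1
    generalize v i = a
    revert a; decide
  · rintro rfl
    have h1 := card_cosupp one
    have h2 : (Finset.univ.filter (fun i => one i = 0)).card = 0 := by
      rw [Finset.card_eq_zero, Finset.filter_eq_empty_iff]
      intro i _
      show ¬ (1 : ZMod 2) = 0
      decide
    omega

/-- The derived properties of the code that are needed for uniqueness. -/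
structure Good (F : Finset V) : Prop where
  card : F.card = 256
  dist : ∀ x ∈ F, ∀ y ∈ F, wt (x + y) = 0 ∨ (5 ≤ wt (x + y) ∧ wt (x + y) ≤ 10) ∨ wt (x + y) = 15
  compl : ∀ x ∈ F, x + one ∈ F
  char : ∀ u : V, u ≠ 0 → (theta u ≤ -7 ∨ 7 ≤ theta u) → ∑ c ∈ F, sg (∑ i, u i * c i) = 0

def chi (u x : V) : ℤ := sg (∑ i, u i * x i)

lemma chi_add (u x y : V) : chi u (x + y) = chi u x * chi u y := by
  unfold chi
  rw [← sg_add, ← Finset.sum_add_distrib]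
  refine congrArg sg (Finset.sum_congr rfl (fun i _ => ?_))
  rw [Pi.add_apply, mul_add]

lemma chi_e (u : V) (i : Fin 15) : chi u (e i) = sg (u i) := by
  unfold chi e
  refine congrArg sg ?_
  simp [Pi.single_apply]

lemma chi_zero_left (x : V) : chi 0 x = 1 := by simp [chi, sg_zero]

lemma sum_chi (u : V) (hu : u ≠ 0) : ∑ x : V, chi u x = 0 := by
  obtain ⟨i, hi⟩ := Function.ne_iff.1 hu
  have hs : sg (u i) = -1 := by
    have : u i ≠ 0 := hi
    simp [sg, this]
  have h1 : ∑ x : V, chi u x = ∑ x : V, chi u (x + e i) :=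
    (Equiv.sum_comp (Equiv.addRight (e i)) (chi u)).symm
  simp only [chi_add, chi_e, hs, mul_neg, mul_one, Finset.sum_neg_distrib] at h1
  linarith

/-- transform of N -/
def S (F : Finset V) (u : V) (k : ℕ) : ℤ := ∑ x : V, chi u x * N F k x

lemma S_nbr (F : Finset V) (u : V) (k : ℕ) :
    ∑ x : V, chi u x * ((∑ i, N F k (x + e i) : ℕ) : ℤ) = theta u * S F u k := by
  push_cast
  simp only [Finset.mul_sum]
  rw [Finset.sum_comm]
  unfold theta
  rw [Finset.sum_mul]
  apply Finset.sum_congr rfl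
  intro i _
  unfold S
  rw [← Equiv.sum_comp (Equiv.addRight (e i)), Finset.mul_sum]
  apply Finset.sum_congr rfl
  intro x _
  simp only [Equiv.coe_addRight, chi_add, chi_e]
  rw [add_assoc, v2, add_zero]; ring

lemma S_rec0 (F : Finset V) (u : V) : theta u * S F u 0 = S F u 1 := by
  rw [← S_nbr]
  simp only [rec_zero]; rfl

lemma S_recS (F : Finset V) (u : V) (k : ℕ) :
    theta u * S F u (k+1) = (k + 2) * S F u (k+2) + ((15 - k : ℕ) : ℤ) * S F u k := by
  rw [← S_nbr]
  simp only [rec_succ]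
  unfold S
  rw [Finset.mul_sum, Finset.mul_sum, ← Finset.sum_add_distrib]
  apply Finset.sum_congr rfl
  intro x _
  push_cast; ring

lemma S_zero (F : Finset V) (u : V) : S F u 0 = ∑ c ∈ F, chi u c := by
  unfold S
  simp only [N_eq]
  push_cast
  simp only [Finset.mul_sum]
  rw [Finset.sum_comm]
  apply Finset.sum_congr rfl
  intro c _
  rw [Finset.sum_eq_single c]
  · rw [if_pos]; · ring
    rw [v2]; exact CR.wt_eq_zero.2 rfl
  · intro b _ hb
    rw [if_neg]; · ring
    rw [CR.wt_eq_zero]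
    intro h
    apply hb
    rw [add_eq_zero_iff_eq_neg, vneg] at h
    exact h
  · simp

lemma CR.good {F : Finset V} {D : V → ℕ} (h : CR F D) : Good F := by
  have hS : ∀ u : V, (theta u - 3) * (theta u + 1) * (theta u + 5) * S F u 0
      = 30 * ∑ x : V, chi u x := by
    intro u
    have h0 := S_rec0 F u
    have h1 := S_recS F u 0
    have h2 := S_recS F u 1
    norm_num at h1 h2
    have h3 : S F u 3 + S F u 2 + 5 * S F u 1 + 5 * S F u 0 = 5 * ∑ x : V, chi u x := by
      unfold S
      simp only [Finset.mul_sum]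
      simp only [← Finset.sum_add_distrib]
      apply Finset.sum_congr rfl
      intro x _
      have := h.packing x
      have h' : (N F 3 x : ℤ) + N F 2 x + 5 * N F 1 x + 5 * N F 0 x = 5 := by exact_mod_cast this
      linear_combination chi u x * h'
    linear_combination 6 * h3 + 2 * h2 + (theta u + 3) * h1 + (theta u ^ 2 + 3 * theta u + 2) * h0
  refine ⟨?_, ?_, ?_, ?_⟩
  · have := hS 0
    have ht : theta (0 : V) = 15 := by decide
    rw [ht, S_zero] at this
    simp only [chi_zero_left] at this
    simp at this
    have h2 : ((F.card : ℕ) : ℤ) = 256 := by linarith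
    exact_mod_cast h2
  · intro x hx y hy
    by_cases hxy : x = y
    · left; rw [hxy, v2]; exact CR.wt_eq_zero.2 rfl
    · right
      have h5 := h.hmin x hx y hy hxy
      have h15 := wt_le (x + y)
      have hN : N F (wt (x + y)) x ≠ 0 := by
        apply Finset.card_ne_zero.2
        exact ⟨y, Finset.mem_filter.2 ⟨hy, rfl⟩⟩
      rw [h.N_eq_n, h.D_zero hx] at hN
      obtain ⟨d1, d2, d3, d4, -⟩ := h.distr
      generalize wt (x + y) = w at *
      have : w ≠ 11 := by rintro rfl; exact hN d1
      have : w ≠ 12 := by rintro rfl; exact hN d2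
      have : w ≠ 13 := by rintro rfl; exact hN d3
      have : w ≠ 14 := by rintro rfl; exact hN d4
      omega
  · intro x hx
    have hN : N F 15 x ≠ 0 := by
      rw [h.N_eq_n, h.D_zero hx, h.distr.2.2.2.2]; omega
    obtain ⟨y, hy⟩ := Finset.card_ne_zero.1 hN
    rw [Finset.mem_filter] at hy
    have h1 := wt_one_iff.1 hy.2
    have : x + one = y := by
      rw [← h1, ← add_assoc, v2, zero_add]
    rw [this]; exact hy.1
  · intro u hu ht
    have := hS u
    rw [sum_chi u hu, mul_zero, S_zero] at this
    have h3 : (theta u - 3) * (theta u + 1) * (theta u + 5) ≠ 0 := by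
      have : theta u - 3 ≠ 0 := by omega
      have : theta u + 1 ≠ 0 := by omega
      have : theta u + 5 ≠ 0 := by omega
      positivity
    exact (mul_eq_zero.1 this).resolve_left h3

end NR

namespace NR

/-- the sixteen coordinate functionals of the extended code -/
def U : Option (Fin 15) → V
  | some i => e i
  | none => one

lemma chi_add_left (u v x : V) : chi (u + v) x = chi u x * chi v x := by
  unfold chi
  rw [← sg_add, ← Finset.sum_add_distrib]
  refine congrArg sg (Finset.sum_congr rfl (fun i _ => ?_))
  rw [Pi.add_apply, add_mul]

lemma chi_sq (u x : V) : chi u x * chi u x = 1 := sg_sq _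

/-- Inner product value -/
def M (v : V) : ℤ := ∑ a, chi (U a) v

lemma theta_one_add (u : V) : theta (one + u) = - theta u := by
  unfold theta
  rw [← Finset.sum_neg_distrib]
  refine Finset.sum_congr rfl (fun i _ => ?_)
  rw [Pi.add_apply, sg_add]
  show sg 1 * _ = _
  rw [sg_one]; ring

lemma wt_e (i : Fin 15) : wt (e i) ≤ 1 := by
  have := (wt_add_e 0 i).1 rfl
  rw [zero_add, CR.wt_eq_zero.2 rfl] at this
  omega

lemma e_self (i : Fin 15) : e i i = 1 := by simp [e]
lemma e_ne {i j : Fin 15} (h : i ≠ j) : e i j = 0 := by simp [e, h.symm]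

lemma theta_ee (i j : Fin 15) : 7 ≤ theta (e i + e j) := by
  rw [theta_wt]
  have := wt_tri (e i) (e j); have := wt_e i; have := wt_e j
  omega
lemma theta_eee (i j k : Fin 15) : 7 ≤ theta (e i + e j + e k) := by
  rw [theta_wt]
  have := wt_tri (e i + e j) (e k)
  have := wt_tri (e i) (e j); have := wt_e i; have := wt_e j; have := wt_e k
  omega
lemma theta_eeee (i j k l : Fin 15) : 7 ≤ theta (e i + e j + e k + e l) := by
  rw [theta_wt]
  have := wt_tri (e i + e j + e k) (e l)
  have := wt_tri (e i + e j) (e k)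
  have := wt_tri (e i) (e j); have := wt_e i; have := wt_e j; have := wt_e k; have := wt_e l
  omega
lemma theta_e (i : Fin 15) : 7 ≤ theta (e i) := by
  rw [theta_wt]
  have := wt_e i
  omega

lemma ne_zero_of_theta {u : V} (h : theta u ≤ -7) : u ≠ 0 := by
  rintro rfl
  rw [theta_wt, CR.wt_eq_zero.2 rfl] at h
  norm_num at h

lemma one_add_spec {u : V} (h : 7 ≤ theta u) : one + u ≠ 0 ∧ theta (one + u) ≤ -7 := by
  have h1 : theta (one + u) ≤ -7 := by rw [theta_one_add]; omega
  exact ⟨ne_zero_of_theta h1, h1⟩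

namespace Good
variable {F : Finset V}

lemma T2 (h : Good F) (a b : Option (Fin 15)) (hab : a ≠ b) :
    ∑ z ∈ F, chi (U a) z * chi (U b) z = 0 := by
  simp only [← chi_add_left]
  have key : U a + U b ≠ 0 ∧ (theta (U a + U b) ≤ -7 ∨ 7 ≤ theta (U a + U b)) := by
    rcases a with _ | i <;> rcases b with _ | j
    · exact absurd rfl hab
    · have := one_add_spec (theta_e j); exact ⟨this.1, Or.inl this.2⟩
    · have := one_add_spec (theta_e i)
      rw [add_comm (U _)]
      exact ⟨this.1, Or.inl this.2⟩
    · refine ⟨?_, Or.inr (theta_ee i j)⟩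
      intro h0
      have h1 := congrFun h0 i
      have hij : j ≠ i := by rintro rfl; exact hab rfl
      simp [U, e_self, e_ne hij] at h1
  exact h.char _ key.1 key.2

lemma T4 (h : Good F) (a b c d : Option (Fin 15)) (hab : a ≠ b) (hac : a ≠ c) (had : a ≠ d)
    (hbc : b ≠ c) (hbd : b ≠ d) (hcd : c ≠ d) :
    ∑ z ∈ F, chi (U a) z * chi (U b) z * (chi (U c) z * chi (U d) z) = 0 := by
  simp only [← chi_add_left]
  have key : U a + U b + (U c + U d) ≠ 0 ∧
      (theta (U a + U b + (U c + U d)) ≤ -7 ∨ 7 ≤ theta (U a + U b + (U c + U d))) := by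
    rcases a with _ | i
    · rcases b with _ | j
      · exact absurd rfl hab
      rcases c with _ | k
      · exact absurd rfl hac
      rcases d with _ | l
      · exact absurd rfl had
      have := one_add_spec (theta_eee j k l)
      rw [show U none + U (some j) + (U (some k) + U (some l)) = one + (e j + e k + e l) by
        simp only [U]; abel]
      exact ⟨this.1, Or.inl this.2⟩
    · rcases b with _ | j
      · rcases c with _ | k
        · exact absurd rfl hbc
        rcases d with _ | l
        · exact absurd rfl hbd
        have := one_add_spec (theta_eee i k l)
        rw [show U (some i) + U none + (U (some k) + U (some l)) = one + (e i + e k + e l) by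
          simp only [U]; abel]
        exact ⟨this.1, Or.inl this.2⟩
      · rcases c with _ | k
        · rcases d with _ | l
          · exact absurd rfl hcd
          have := one_add_spec (theta_eee i j l)
          rw [show U (some i) + U (some j) + (U none + U (some l)) = one + (e i + e j + e l) by
            simp only [U]; abel]
          exact ⟨this.1, Or.inl this.2⟩
        · rcases d with _ | l
          · have := one_add_spec (theta_eee i j k)
            rw [show U (some i) + U (some j) + (U (some k) + U none) = one + (e i + e j + e k) by
              simp only [U]; abel]
            exact ⟨this.1, Or.inl this.2⟩
          · rw [show U (some i) + U (some j) + (U (some k) + U (some l)) = e i + e j + e k + e l by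
              simp only [U]; abel]
            refine ⟨?_, Or.inr (theta_eeee i j k l)⟩
            intro h0
            have h1 := congrFun h0 i
            have hij : j ≠ i := by rintro rfl; exact hab rfl
            have hik : k ≠ i := by rintro rfl; exact hac rfl
            have hil : l ≠ i := by rintro rfl; exact had rfl
            simp [e_self, e_ne hij, e_ne hik, e_ne hil] at h1
  exact h.char _ key.1 key.2

lemma T2' (h : Good F) (a b : Option (Fin 15)) :
    ∑ z ∈ F, chi (U a) z * chi (U b) z = 256 * (if a = b then 1 else 0) := by
  by_cases hab : a = b
  · subst hab
    simp [chi_sq, h.card]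
  · rw [h.T2 a b hab, if_neg hab]; rfl

lemma T4' (h : Good F) (a b c d : Option (Fin 15)) :
    ∑ z ∈ F, chi (U a) z * chi (U b) z * (chi (U c) z * chi (U d) z) =
      256 * ((if a = b then 1 else 0) * (if c = d then 1 else 0)
        + (if a = c then 1 else 0) * (if b = d then 1 else 0)
        + (if a = d then 1 else 0) * (if b = c then 1 else 0)
        - 2 * ((if a = b then 1 else 0) * (if c = d then 1 else 0) * (if a = c then 1 else 0))) := by
  by_cases hab : a = b
  · subst hab
    simp only [chi_sq, one_mul, h.T2']
    by_cases hcd : c = d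
    · subst hcd
      by_cases hac : a = c <;> simp [hac]
    · by_cases hac : a = c
      · subst hac; simp [hcd]
      · simp [hcd, hac]
  by_cases hac : a = c
  · subst hac
    have : ∀ z, chi (U a) z * chi (U b) z * (chi (U a) z * chi (U d) z) = chi (U b) z * chi (U d) z := by
      intro z
      linear_combination (chi (U b) z * chi (U d) z) * chi_sq (U a) z
    simp only [this, h.T2']
    have hba : ¬ b = a := fun hh => hab hh.symm
    simp [hab, hba]
  by_cases had : a = d
  · subst had
    have : ∀ z, chi (U a) z * chi (U b) z * (chi (U c) z * chi (U a) z) = chi (U b) z * chi (U c) z := by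
      intro z
      linear_combination (chi (U b) z * chi (U c) z) * chi_sq (U a) z
    simp only [this, h.T2']
    simp [hab, hac]
  rw [if_neg hab, if_neg hac, if_neg had]
  simp only [zero_mul, mul_zero, add_zero, sub_zero]
  by_cases hbc : b = c
  · subst hbc
    have : ∀ z, chi (U a) z * chi (U b) z * (chi (U b) z * chi (U d) z) = chi (U a) z * chi (U d) z := by
      intro z
      linear_combination (chi (U a) z * chi (U d) z) * chi_sq (U b) z
    simp only [this]
    exact h.T2 _ _ had
  by_cases hbd : b = d
  · subst hbd
    have : ∀ z, chi (U a) z * chi (U b) z * (chi (U c) z * chi (U b) z) = chi (U a) z * chi (U c) z := by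
      intro z
      linear_combination (chi (U a) z * chi (U c) z) * chi_sq (U b) z
    simp only [this]
    exact h.T2 _ _ hac
  by_cases hcd : c = d
  · subst hcd
    simp only [chi_sq, mul_one]
    exact h.T2 _ _ hab
  exact h.T4 a b c d hab hac had hbc hbd hcd

lemma M2 (h : Good F) (p : V) : ∑ z ∈ F, M (z + p) ^ 2 = 4096 := by
  have h1 : ∀ z, M (z + p) ^ 2 = ∑ a, ∑ b, (chi (U a) p * chi (U b) p) * (chi (U a) z * chi (U b) z) := by
    intro z
    unfold M
    rw [sq, Finset.sum_mul_sum]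
    refine Finset.sum_congr rfl (fun a _ => Finset.sum_congr rfl (fun b _ => ?_))
    rw [chi_add, chi_add]; ring
  simp only [h1]
  rw [Finset.sum_comm]
  have h2 : ∀ a : Option (Fin 15), ∑ z ∈ F, ∑ b, (chi (U a) p * chi (U b) p) * (chi (U a) z * chi (U b) z) = 256 := by
    intro a
    rw [Finset.sum_comm]
    simp only [← Finset.mul_sum, h.T2']
    simp [chi_sq]
  simp only [h2]
  simp

lemma M4 (h : Good F) (p r : V) : ∑ z ∈ F, M (z + p) ^ 2 * M (z + r) ^ 2 = 256 * (224 + 2 * M (p + r) ^ 2) := by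
  have h1 : ∀ z, M (z + p) ^ 2 * M (z + r) ^ 2 = ∑ a, ∑ b, ∑ c, ∑ d,
      (chi (U a) p * chi (U b) p * (chi (U c) r * chi (U d) r)) *
      (chi (U a) z * chi (U b) z * (chi (U c) z * chi (U d) z)) := by
    intro z
    unfold M
    rw [sq, sq, Finset.sum_mul_sum, Finset.sum_mul_sum, Finset.sum_mul]
    refine Finset.sum_congr rfl (fun a _ => ?_)
    rw [Finset.sum_mul]
    refine Finset.sum_congr rfl (fun b _ => ?_)
    rw [Finset.mul_sum]
    refine Finset.sum_congr rfl (fun c _ => ?_)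
    rw [Finset.mul_sum]
    refine Finset.sum_congr rfl (fun d _ => ?_)
    simp only [chi_add]; ring
  simp only [h1]
  have h2 : ∑ z ∈ F, ∑ a, ∑ b, ∑ c, ∑ d,
      (chi (U a) p * chi (U b) p * (chi (U c) r * chi (U d) r)) *
      (chi (U a) z * chi (U b) z * (chi (U c) z * chi (U d) z)) =
      ∑ a, ∑ b, ∑ c, ∑ d, (chi (U a) p * chi (U b) p * (chi (U c) r * chi (U d) r)) *
      ∑ z ∈ F, (chi (U a) z * chi (U b) z * (chi (U c) z * chi (U d) z)) := by
    rw [Finset.sum_comm]; refine Finset.sum_congr rfl (fun a _ => ?_)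
    rw [Finset.sum_comm]; refine Finset.sum_congr rfl (fun b _ => ?_)
    rw [Finset.sum_comm]; refine Finset.sum_congr rfl (fun c _ => ?_)
    rw [Finset.sum_comm]; refine Finset.sum_congr rfl (fun d _ => ?_)
    rw [Finset.mul_sum]
  rw [h2]
  simp only [h.T4']
  have e1 : ∑ a : Option (Fin 15), ∑ b : Option (Fin 15), ∑ c : Option (Fin 15), ∑ d : Option (Fin 15),
      (chi (U a) p * chi (U b) p * (chi (U c) r * chi (U d) r)) *
      ((if a = b then 1 else 0) * (if c = d then 1 else 0)) = 256 := by
    simp [chi_sq]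
  have e2 : ∑ a : Option (Fin 15), ∑ b : Option (Fin 15), ∑ c : Option (Fin 15), ∑ d : Option (Fin 15),
      (chi (U a) p * chi (U b) p * (chi (U c) r * chi (U d) r)) *
      ((if a = c then 1 else 0) * (if b = d then 1 else 0)) = M (p + r) ^ 2 := by
    unfold M
    rw [sq, Finset.sum_mul_sum]
    refine Finset.sum_congr rfl (fun a _ => Finset.sum_congr rfl (fun b _ => ?_))
    rw [Finset.sum_eq_single a, Finset.sum_eq_single b]
    · rw [if_pos rfl, if_pos rfl, chi_add, chi_add]; ring
    · intro d _ hd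
      rw [if_neg hd.symm]; simp
    · intro hh; exact absurd (Finset.mem_univ _) hh
    · intro c _ hc
      refine Finset.sum_eq_zero (fun d _ => ?_)
      rw [if_neg hc.symm]; simp
    · intro hh; exact absurd (Finset.mem_univ _) hh
  have e3 : ∑ a : Option (Fin 15), ∑ b : Option (Fin 15), ∑ c : Option (Fin 15), ∑ d : Option (Fin 15),
      (chi (U a) p * chi (U b) p * (chi (U c) r * chi (U d) r)) *
      ((if a = d then 1 else 0) * (if b = c then 1 else 0)) = M (p + r) ^ 2 := by
    unfold M
    rw [sq, Finset.sum_mul_sum]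
    refine Finset.sum_congr rfl (fun a _ => Finset.sum_congr rfl (fun b _ => ?_))
    rw [Finset.sum_eq_single b, Finset.sum_eq_single a]
    · rw [if_pos rfl, if_pos rfl, chi_add, chi_add]; ring
    · intro d _ hd
      rw [if_neg hd.symm]; simp
    · intro hh; exact absurd (Finset.mem_univ _) hh
    · intro c _ hc
      refine Finset.sum_eq_zero (fun d _ => ?_)
      rw [if_neg hc.symm]; simp
    · intro hh; exact absurd (Finset.mem_univ _) hh
  have e4 : ∑ a : Option (Fin 15), ∑ b : Option (Fin 15), ∑ c : Option (Fin 15), ∑ d : Option (Fin 15),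
      (chi (U a) p * chi (U b) p * (chi (U c) r * chi (U d) r)) *
      ((if a = b then 1 else 0) * (if c = d then 1 else 0) * (if a = c then 1 else 0)) = 16 := by
    simp [← mul_assoc, chi_sq]
  have e5 : ∀ a b c d : Option (Fin 15), (chi (U a) p * chi (U b) p * (chi (U c) r * chi (U d) r)) * (256 * ((if a = b then 1 else 0) * (if c = d then 1 else 0)
        + (if a = c then 1 else 0) * (if b = d then 1 else 0)
        + (if a = d then 1 else 0) * (if b = c then 1 else 0)
        - 2 * ((if a = b then 1 else 0) * (if c = d then 1 else 0) * (if a = c then 1 else 0)))) =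
      256 * ((chi (U a) p * chi (U b) p * (chi (U c) r * chi (U d) r)) *
      ((if a = b then 1 else 0) * (if c = d then 1 else 0))) + 256 * ((chi (U a) p * chi (U b) p * (chi (U c) r * chi (U d) r)) *
      ((if a = c then 1 else 0) * (if b = d then 1 else 0))) + 256 * ((chi (U a) p * chi (U b) p * (chi (U c) r * chi (U d) r)) *
      ((if a = d then 1 else 0) * (if b = c then 1 else 0))) - 512 * ((chi (U a) p * chi (U b) p * (chi (U c) r * chi (U d) r)) *
      ((if a = b then 1 else 0) * (if c = d then 1 else 0) * (if a = c then 1 else 0))) := by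
    intro a b c d; ring
  simp only [e5, Finset.sum_add_distrib, Finset.sum_sub_distrib, ← Finset.mul_sum]
  rw [e1, e2, e3, e4]; ring

end Good
end NR

namespace NR

lemma M_eq (v : V) : M v = chi one v + theta v := by
  unfold M theta
  rw [Fintype.sum_option]
  refine congrArg₂ (· + ·) rfl (Finset.sum_congr rfl (fun i _ => ?_))
  show chi (e i) v = _
  unfold chi
  refine congrArg sg ?_
  simp [e, Pi.single_apply]

lemma chi_one_wt (v : V) : chi one v = (-1) ^ (wt v) := by
  unfold chi
  rw [sg_sum]
  have : ∀ i, sg (one i * v i) = if v i ≠ 0 then -1 else 1 := by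
    intro i
    show sg (1 * v i) = _
    rw [one_mul]; unfold sg
    split_ifs <;> simp_all
  simp only [this]
  rw [Finset.prod_ite]
  simp [← card_supp]

lemma M_wt (v : V) : (Even (wt v) ∧ M v = 16 - 2 * (wt v : ℤ)) ∨ (Odd (wt v) ∧ M v = 14 - 2 * (wt v : ℤ)) := by
  rw [M_eq, chi_one_wt, theta_wt]
  rcases Nat.even_or_odd (wt v) with h | h
  · left; refine ⟨h, ?_⟩; rw [h.neg_one_pow]; ring
  · right; refine ⟨h, ?_⟩; rw [h.neg_one_pow]; ring

lemma M_dvd (v : V) : 4 ∣ M v := by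
  rcases M_wt v with ⟨⟨k, hk⟩, h⟩ | ⟨⟨k, hk⟩, h⟩ <;> omega

lemma M_bd (v : V) : -16 ≤ M v ∧ M v ≤ 16 := by
  have := wt_le v
  rcases M_wt v with ⟨⟨k, hk⟩, h⟩ | ⟨⟨k, hk⟩, h⟩ <;> omega

lemma M_16 {v : V} (hv : M v = 16) : v = 0 := by
  apply CR.wt_eq_zero.1
  rcases M_wt v with ⟨⟨k, hk⟩, h⟩ | ⟨⟨k, hk⟩, h⟩ <;> omega

lemma M_n16 {v : V} (hv : M v = -16) : v = one := by
  apply wt_one_iff.1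
  have := wt_le v
  rcases M_wt v with ⟨⟨k, hk⟩, h⟩ | ⟨⟨k, hk⟩, h⟩ <;> omega

lemma M_zero : M 0 = 16 := by
  have := CR.wt_eq_zero.2 (rfl : (0 : V) = 0)
  rcases M_wt 0 with ⟨⟨k, hk⟩, h⟩ | ⟨⟨k, hk⟩, h⟩ <;> omega

lemma chi_one_one : chi one one = -1 := by
  rw [chi_one_wt, wt_one_iff.2 rfl]; norm_num

lemma M_add_one (v : V) : M (v + one) = - M v := by
  rw [M_eq, M_eq, chi_add, chi_one_one, add_comm v, theta_one_add]; ring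

lemma M_one : M one = -16 := by
  have := M_add_one 0
  rwa [zero_add, M_zero] at this

lemma chi_pm (u x : V) : chi u x = 1 ∨ chi u x = -1 := by
  unfold chi sg; split_ifs <;> simp

lemma cube (a b c : V) : 8 ∣ M (a + b + c) + M (a + b) + M (b + c) + M (a + c) + M a + M b + M c + 16 := by
  have h : M (a + b + c) + M (a + b) + M (b + c) + M (a + c) + M a + M b + M c + 16 =
      ∑ t, (1 + chi (U t) a) * (1 + chi (U t) b) * (1 + chi (U t) c) := by
    have : ∀ t, (1 + chi (U t) a) * (1 + chi (U t) b) * (1 + chi (U t) c) =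
      chi (U t) (a + b + c) + chi (U t) (a + b) + chi (U t) (b + c) + chi (U t) (a + c)
        + chi (U t) a + chi (U t) b + chi (U t) c + 1 := by
      intro t; simp only [chi_add]; ring
    simp only [this, Finset.sum_add_distrib, M]
    simp
  rw [h]
  refine Finset.dvd_sum (fun t _ => ?_)
  rcases chi_pm (U t) a with h1 | h1 <;> rcases chi_pm (U t) b with h2 | h2 <;>
    rcases chi_pm (U t) c with h3 | h3 <;> rw [h1, h2, h3] <;> norm_num

lemma sq16 {x : ℤ} (h : 4 ≤ x ∨ x ≤ -4) : 16 ≤ x ^ 2 := by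
  rcases h with h | h <;> nlinarith
lemma sq256 {x : ℤ} (h : -16 ≤ x ∧ x ≤ 16) : 0 ≤ 256 - x ^ 2 := by
  obtain ⟨h1, h2⟩ := h
  nlinarith

namespace Good
variable {F : Finset V}

lemma Mval (h : Good F) {z w : V} (hz : z ∈ F) (hw : w ∈ F) :
    M (z + w) = 16 ∨ M (z + w) = 4 ∨ M (z + w) = 0 ∨ M (z + w) = -4 ∨ M (z + w) = -16 := by
  have hd := h.dist z hz w hw
  rcases M_wt (z + w) with ⟨⟨k, hk⟩, h⟩ | ⟨⟨k, hk⟩, h⟩ <;> omega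

lemma eq_of_add {z w : V} (h : z + w = 0) : z = w := by
  rw [eq_neg_of_add_eq_zero_left h, vneg]
lemma eq_of_add_one {z w : V} (h : z + w = one) : z = w + one := by
  rw [← h, add_comm z w, ← add_assoc, v2, zero_add]

lemma one_ne (c : V) : c ≠ c + one := by
  intro h
  have := congrFun h 0
  have h2 : c 0 = c 0 + 1 := this
  simp at h2

/-- pairwise values, other than the extreme ones -/
lemma Mval' (h : Good F) {z w : V} (hz : z ∈ F) (hw : w ∈ F) (h1 : z ≠ w) (h2 : z ≠ w + one) :
    M (z + w) = 4 ∨ M (z + w) = 0 ∨ M (z + w) = -4 := by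
  rcases h.Mval hz hw with h' | h' | h' | h' | h'
  · exact absurd (eq_of_add (M_16 h')) h1
  · exact Or.inl h'
  · exact Or.inr (Or.inl h')
  · exact Or.inr (Or.inr h')
  · exact absurd (eq_of_add_one (M_n16 h')) h2

lemma M_self (c : V) : M (c + c) = 16 := by rw [v2, M_zero]
lemma M_self_one (c : V) : M (c + one + c) = -16 := by
  rw [add_right_comm, v2, zero_add, M_one]

lemma count (h : Good F) {c : V} (hc : c ∈ F) :
    ∑ z ∈ F, (if 8 ∣ M (z + c) then 0 else 1 : ℤ) = 224 := by
  have h2 := h.M2 c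
  have h3 : ∀ z ∈ F, M (z + c) ^ 2 = 16 * (if 8 ∣ M (z + c) then 0 else 1 : ℤ)
      + (if c = z then 256 else 0) + (if c + one = z then 256 else 0) := by
    intro z hz
    by_cases h1 : c = z
    · subst h1
      rw [if_pos rfl, if_neg (one_ne c).symm, M_self]; norm_num
    by_cases h2 : c + one = z
    · subst h2
      rw [if_neg h1, if_pos rfl, M_self_one]; norm_num
    rw [if_neg h1, if_neg h2]
    rcases h.Mval' hz hc (Ne.symm h1) (Ne.symm h2) with h' | h' | h' <;> rw [h'] <;> norm_num
  rw [Finset.sum_congr rfl h3, Finset.sum_add_distrib, Finset.sum_add_distrib,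
    Finset.sum_ite_eq, Finset.sum_ite_eq, if_pos hc, if_pos (h.compl c hc), ← Finset.mul_sum] at h2
  linarith

lemma step_a (h : Good F) {c d : V} (hc : c ∈ F) (hd : d ∈ F) (hcd : M (c + d) = 0) {z : V}
    (hz : z ∈ F) (h8 : 8 ∣ M (z + c)) : 8 ∣ M (z + d) := by
  have key : ∑ z ∈ F, (M (z + d) ^ 2 * (16 - M (z + c) ^ 2) - (if d = z then 4096 else 0)
      - (if d + one = z then 4096 else 0)) = 0 := by
    rw [Finset.sum_sub_distrib, Finset.sum_sub_distrib, Finset.sum_ite_eq, Finset.sum_ite_eq, if_pos hd,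
      if_pos (h.compl d hd)]
    simp only [mul_sub, Finset.sum_sub_distrib, ← Finset.sum_mul]
    rw [h.M2, h.M4, add_comm d c, hcd]; norm_num
  have hdc : M (d + c) = 0 := by rw [add_comm, hcd]
  have hd1c : M (d + one + c) = 0 := by rw [add_right_comm, M_add_one, hdc]; rfl
  have hnn : ∀ z ∈ F, 0 ≤ (M (z + d) ^ 2 * (16 - M (z + c) ^ 2) - (if d = z then 4096 else 0)
      - (if d + one = z then 4096 else 0)) := by
    intro z hz
    by_cases h1 : d = z
    · subst h1
      rw [if_pos rfl, if_neg (one_ne d).symm, M_self, hdc]; norm_num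
    by_cases h2 : d + one = z
    · subst h2
      rw [if_neg h1, if_pos rfl, M_self_one, hd1c]; norm_num
    rw [if_neg h1, if_neg h2]
    by_cases h3 : z = c
    · subst h3; rw [hcd]; norm_num
    by_cases h4 : z = c + one
    · subst h4
      rw [add_right_comm c, M_add_one, hcd]; norm_num
    have := sq_nonneg (M (z + d))
    rcases h.Mval' hz hc h3 h4 with h' | h' | h' <;> rw [h'] <;> linarith
  have hz0 := (Finset.sum_eq_zero_iff_of_nonneg hnn).1 key z hz
  by_cases h1 : d = z
  · subst h1; rw [M_self]; norm_num
  by_cases h2 : d + one = z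
  · subst h2; rw [M_self_one]; norm_num
  rw [if_neg h1, if_neg h2] at hz0
  by_cases h3 : z = c
  · subst h3; rw [hcd]; norm_num
  by_cases h4 : z = c + one
  · subst h4
    rw [add_right_comm c, M_add_one, hcd]; norm_num
  rcases h.Mval' hz hc h3 h4 with h' | h' | h' <;> rw [h'] at h8 hz0
  · omega
  · have : M (z + d) ^ 2 = 0 := by linarith
    rw [pow_eq_zero_iff (by norm_num)] at this
    rw [this]; norm_num
  · omega

lemma step_a' (h : Good F) (h0 : 0 ∈ F) {w : V} (hw : w ∈ F) (h8 : 8 ∣ M w) {z : V} (hz : z ∈ F) :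
    8 ∣ M (z + w) ↔ 8 ∣ M z := by
  have hv := h.Mval hw h0
  rw [add_zero] at hv
  rcases hv with h' | h' | h' | h' | h'
  · rw [M_16 h', add_zero]
  · omega
  · have e1 : M (w + 0) = 0 := by rw [add_zero, h']
    have e2 : M (0 + w) = 0 := by rw [zero_add, h']
    constructor
    · intro hh
      have := h.step_a hw h0 e1 hz hh
      rwa [add_zero] at this
    · intro hh
      exact h.step_a h0 hw e2 hz (by rwa [add_zero])
  · omega
  · rw [M_n16 h', M_add_one, dvd_neg]

set_option maxHeartbeats 1000000 in
lemma step_b (h : Good F) (h0 : 0 ∈ F) {c w : V} (hc : c ∈ F) (hw : w ∈ F) (hw0 : M w = 0) :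
    c + w ∈ F := by
  by_contra hv
  have hcw : c + (c + w) = w := by rw [← add_assoc, v2, zero_add]
  have h8w : 8 ∣ M w := by rw [hw0]; norm_num
  have hmod : ∀ z ∈ F, ¬ 8 ∣ M (z + c) → 16 ≤ M (z + (c + w)) ^ 2 := by
    intro z hz hzc
    have h1 := cube z c w
    have h2 := h.step_a' h0 hw h8w hz
    have h3 := h.step_a' h0 hw h8w hc
    have a1 := M_dvd (z + w)
    have a2 := M_dvd z
    have a3 := M_dvd (c + w)
    have a4 := M_dvd c
    have a5 := M_dvd (z + c)
    have a6 := M_dvd (z + c + w)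
    rw [hw0] at h1
    have : M (z + c + w) ≠ 0 := by omega
    rw [← add_assoc]
    have : 4 ≤ M (z + c + w) ∨ M (z + c + w) ≤ -4 := by omega
    exact sq16 this
  have hzc : ∀ z ∈ F, 8 ∣ M (z + c) → M (z + c) ^ 2 * M (z + (c + w)) ^ 2 = 0 := by
    intro z hz h8
    by_cases h1 : z = c
    · subst h1; rw [hcw, hw0]; norm_num
    by_cases h2 : z = c + one
    · subst h2
      rw [add_right_comm c one (c + w), hcw, M_add_one, hw0]; norm_num
    rcases h.Mval' hz hc h1 h2 with h' | h' | h' <;> rw [h'] at h8 ⊢ <;> first | omega | norm_num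
  have hcount := h.count hc
  have k1 : ∑ z ∈ F, (if 8 ∣ M (z + c) then 0 else M (z + (c + w)) ^ 2 - 16 : ℤ) = 0 := by
    have h4 := h.M4 c (c + w)
    rw [hcw, hw0] at h4
    have e : ∀ z ∈ F, M (z + c) ^ 2 * M (z + (c + w)) ^ 2 =
        16 * (if 8 ∣ M (z + c) then 0 else M (z + (c + w)) ^ 2 - 16 : ℤ)
        + 256 * (if 8 ∣ M (z + c) then 0 else 1 : ℤ) := by
      intro z hz
      split_ifs with h8
      · rw [hzc z hz h8]; norm_num
      · have : M (z + c) ^ 2 = 16 := by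
          rcases h.Mval hz hc with h' | h' | h' | h' | h' <;> rw [h'] at h8 ⊢ <;>
            first | omega | norm_num
        rw [this]; ring
    rw [Finset.sum_congr rfl e, Finset.sum_add_distrib, ← Finset.mul_sum, ← Finset.mul_sum, hcount] at h4
    linarith
  have k2 := (Finset.sum_eq_zero_iff_of_nonneg (by
    intro z hz
    split_ifs with h8
    · exact le_rfl
    · linarith [hmod z hz h8])).1 k1
  have k3 : ∀ z ∈ F, ¬ 8 ∣ M (z + c) → M (z + (c + w)) ^ 2 = 16 := by
    intro z hz h8
    have := k2 z hz
    rw [if_neg h8] at this; linarith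
  have hnn : ∀ z, 0 ≤ M (z + (c + w)) ^ 2 * (256 - M (z + (c + w)) ^ 2) := by
    intro z
    have := M_bd (z + (c + w))
    have h1 := sq_nonneg (M (z + (c + w)))
    have : 0 ≤ 256 - M (z + (c + w)) ^ 2 := sq256 this
    exact mul_nonneg h1 this
  have k4 : ∑ z ∈ F, (if 8 ∣ M (z + c) then M (z + (c + w)) ^ 2 * (256 - M (z + (c + w)) ^ 2) else 0 : ℤ) = 0 := by
    have h4 := h.M4 (c + w) (c + w)
    have h2 := h.M2 (c + w)
    rw [M_self] at h4
    have e : ∀ z ∈ F, (if 8 ∣ M (z + c) then M (z + (c + w)) ^ 2 * (256 - M (z + (c + w)) ^ 2) else 0 : ℤ)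
        = 256 * M (z + (c + w)) ^ 2 - M (z + (c + w)) ^ 2 * M (z + (c + w)) ^ 2
          - 3840 * (if 8 ∣ M (z + c) then 0 else 1 : ℤ) := by
      intro z hz
      split_ifs with h8
      · ring
      · rw [k3 z hz h8]; norm_num
    rw [Finset.sum_congr rfl e, Finset.sum_sub_distrib, Finset.sum_sub_distrib, ← Finset.mul_sum,
      ← Finset.mul_sum, hcount, h4, h2]
    norm_num
  have k5 := (Finset.sum_eq_zero_iff_of_nonneg (by
    intro z hz
    split_ifs with h8
    · exact hnn z
    · exact le_rfl)).1 k4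
  have k6 : ∀ z ∈ F, 8 ∣ M (z + c) → M (z + (c + w)) ^ 2 = 0 := by
    intro z hz h8
    have := k5 z hz
    rw [if_pos h8] at this
    rcases mul_eq_zero.1 this with h' | h'
    · exact h'
    · exfalso
      have h16 : (M (z + (c + w)) - 16) * (M (z + (c + w)) + 16) = 0 := by linarith
      rcases mul_eq_zero.1 h16 with h' | h'
      · have := eq_of_add (M_16 (v := z + (c + w)) (by linarith))
        rw [← this] at hv; exact hv hz
      · have := eq_of_add_one (M_n16 (v := (c + w) + z) (by rw [add_comm]; linarith))
        rw [this] at hv; exact hv (h.compl z hz)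
  have h2 := h.M2 (c + w)
  have e : ∀ z ∈ F, M (z + (c + w)) ^ 2 = 16 * (if 8 ∣ M (z + c) then 0 else 1 : ℤ) := by
    intro z hz
    split_ifs with h8
    · rw [k6 z hz h8]; norm_num
    · rw [k3 z hz h8]; norm_num
  rw [Finset.sum_congr rfl e, ← Finset.mul_sum, hcount] at h2
  norm_num at h2

lemma add_mem (h : Good F) (h0 : 0 ∈ F) {c w : V} (hc : c ∈ F) (hw : w ∈ F) (h8 : 8 ∣ M w) :
    c + w ∈ F := by
  have hv := h.Mval hw h0
  rw [add_zero] at hv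
  rcases hv with h' | h' | h' | h' | h'
  · rw [M_16 h', add_zero]; exact hc
  · omega
  · exact h.step_b h0 hc hw h'
  · omega
  · rw [M_n16 h']; exact h.compl c hc

lemma orth (h : Good F) (h0 : 0 ∈ F) {c w : V} (hc : c ∈ F) (hw : w ∈ F) (h8 : 8 ∣ M w)
    (hev : ∑ i, w i = 0) : ∑ i, c i * w i = 0 := by
  have h1 := h.step_a' h0 hw h8 hc
  have a2 := M_dvd (c + w)
  have a3 := M_dvd c
  have hcw : chi one w = 1 := by
    unfold chi
    have : ∑ i, one i * w i = 0 := by rw [← hev]; exact Finset.sum_congr rfl (fun i _ => one_mul _)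
    rw [this, sg_zero]
  have key : 15 - theta c - theta w + theta (c + w) = 30 - 2 * theta (fun i => c i * w i) := by
    have : ∀ a b : ZMod 2, 1 - sg a - sg b + sg (a + b) = 2 - 2 * sg (a * b) := by decide
    have h2 := Finset.sum_congr (rfl : (Finset.univ : Finset (Fin 15)) = Finset.univ)
      (fun i _ => this (c i) (w i))
    rw [Finset.sum_add_distrib, Finset.sum_sub_distrib, Finset.sum_sub_distrib, Finset.sum_sub_distrib,
      ← Finset.mul_sum] at h2
    simp at h2
    exact h2
  have e1 := M_eq c
  have e2 := M_eq w
  have e3 := M_eq (c + w)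
  rw [chi_add, hcw] at e3
  rw [hcw] at e2
  rw [theta_wt (fun i => c i * w i)] at key
  have hE : Even (wt (fun i => c i * w i)) := by
    rw [Nat.even_iff]
    have : M (c + w) - M c - M w + 16 = 4 * (wt (fun i => c i * w i) : ℤ) := by linarith
    omega
  have h3 := chi_one_wt (fun i => c i * w i)
  rw [hE.neg_one_pow] at h3
  unfold chi at h3
  have h4 : ∑ i, one i * (c i * w i) = ∑ i, c i * w i := Finset.sum_congr rfl (fun i _ => one_mul _)
  rw [h4] at h3
  unfold sg at h3
  split_ifs at h3 with h5
  exact h5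

end Good
end NR

namespace NR

/-- coordinate functions: `X j i` is bit `j` of `i + 1` -/
def X (j : Fin 4) : V := fun i => if Nat.testBit (i.val + 1) j.val then 1 else 0

/-- normalized codes -/
structure Norm (C : Finset V) : Prop where
  zero : 0 ∈ C
  card : C.card = 256
  dist : ∀ x ∈ C, ∀ y ∈ C, x ≠ y → 5 ≤ wt (x + y)
  addone : ∀ c ∈ C, c + one ∈ C
  addX : ∀ c ∈ C, ∀ j, c + X j ∈ C
  orth : ∀ c ∈ C, ∀ j, ∑ i, c i * X j i = 0

abbrev W := Fin 4 → ZMod 2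

def ip (l x : W) : ZMod 2 := ∑ j, l j * x j

lemma ip_add (l x y : W) : ip l (x + y) = ip l x + ip l y := by
  unfold ip
  rw [← Finset.sum_add_distrib]
  exact Finset.sum_congr rfl (fun i _ => by rw [Pi.add_apply, mul_add])

lemma ip_add_left (l m x : W) : ip (l + m) x = ip l x + ip m x := by
  unfold ip
  rw [← Finset.sum_add_distrib]
  exact Finset.sum_congr rfl (fun i _ => by rw [Pi.add_apply, add_mul])

lemma sum_ip (x : W) (hx : x ≠ 0) : ∑ l : W, sg (ip l x) = 0 := by
  obtain ⟨j, hj⟩ := Function.ne_iff.1 hx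
  have h1 : x j = 1 := by
    have h2 : x j ≠ 0 := hj
    revert h2; generalize x j = a; revert a; decide
  have hs : ∑ l : W, sg (ip l x) = ∑ l : W, sg (ip (l + Pi.single j 1) x) :=
    (Equiv.sum_comp (Equiv.addRight (Pi.single j (1 : ZMod 2) : W)) (fun l => sg (ip l x))).symm
  have h2 : ip (Pi.single j 1) x = 1 := by
    unfold ip
    simp [Pi.single_apply, h1]
  have h3 : ∑ l : W, sg (ip (l + Pi.single j 1) x) = - ∑ l : W, sg (ip l x) := by
    rw [← Finset.sum_neg_distrib]
    refine Finset.sum_congr rfl (fun l _ => ?_)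
    rw [ip_add_left, sg_add, h2, sg_one]; ring
  linarith

lemma X_inj : ∀ i i' : Fin 15, (∀ j, X j i = X j i') → i = i' := by decide
lemma X_ne : ∀ i : Fin 15, (fun j => X j i) ≠ (0 : W) := by decide

lemma wt_perm (σ : Equiv.Perm (Fin 15)) (v : V) : wt (fun i => v (σ i)) = wt v := by
  have h1 := theta_wt v
  have h2 := theta_wt (fun i => v (σ i))
  have h3 : theta (fun i => v (σ i)) = theta v := Equiv.sum_comp σ (fun i => sg (v i))
  omega

namespace Good
variable {F : Finset V}

lemma sum_add (a b : V) : ∑ i, (a + b) i = ∑ i, a i + ∑ i, b i := by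
  rw [← Finset.sum_add_distrib]; rfl

lemma sum_one : ∑ i, one i = 1 := by
  show ∑ i : Fin 15, (1 : ZMod 2) = 1
  simp; decide

def SS (h : Good F) (h0 : 0 ∈ F) : Submodule (ZMod 2) V where
  carrier := {w | w ∈ F ∧ 8 ∣ M w ∧ ∑ i, w i = 0}
  zero_mem' := ⟨h0, by rw [M_zero]; norm_num, by simp⟩
  add_mem' := by
    rintro a b ⟨a1, a2, a3⟩ ⟨b1, b2, b3⟩
    exact ⟨h.add_mem h0 a1 b1 b2, (h.step_a' h0 b1 b2 a1).2 a2, by rw [sum_add, a3, b3, add_zero]⟩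
  smul_mem' := by
    rintro c x ⟨a1, a2, a3⟩
    have : c = 0 ∨ c = 1 := by revert c; decide
    rcases this with rfl | rfl
    · rw [zero_smul]
      exact ⟨h0, by rw [M_zero]; norm_num, by simp⟩
    · rw [one_smul]; exact ⟨a1, a2, a3⟩

lemma card_S (h : Good F) (h0 : 0 ∈ F) : (F.filter (fun w => 8 ∣ M w ∧ ∑ i, w i = 0)).card = 16 := by
  have hc := h.count h0
  simp only [add_zero] at hc
  have h1 : (F.filter (fun w => 8 ∣ M w)).card = 32 := by
    have h2 : ∑ z ∈ F, (if 8 ∣ M z then 0 else 1 : ℤ) = ((F.filter (fun w => ¬ 8 ∣ M w)).card : ℤ) := by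
      rw [Finset.card_filter]
      push_cast
      refine Finset.sum_congr rfl (fun z _ => ?_)
      by_cases hz : 8 ∣ M z <;> simp [hz]
    have h3 := Finset.card_filter_add_card_filter_not (s := F) (fun w => 8 ∣ M w)
    rw [h.card] at h3
    rw [h2] at hc
    omega
  have h4 := Finset.card_filter_add_card_filter_not (s := F.filter (fun w => 8 ∣ M w)) (fun w => ∑ i, w i = 0)
  rw [Finset.filter_filter, Finset.filter_filter, h1] at h4
  have h5 : (F.filter (fun w => 8 ∣ M w ∧ ∑ i, w i = 0)).card = (F.filter (fun w => 8 ∣ M w ∧ ¬ ∑ i, w i = 0)).card := by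
    have z1 : ∀ a : ZMod 2, a ≠ 0 → a + 1 = 0 := by decide
    have hoo : ∀ a : V, a + one + one = a := fun a => by rw [add_assoc, v2, add_zero]
    refine Finset.card_bij' (fun a _ => a + one) (fun a _ => a + one) ?_ ?_ ?_ ?_
    · intro a ha
      rw [Finset.mem_filter] at ha ⊢
      refine ⟨h.compl a ha.1, ?_, ?_⟩
      · rw [M_add_one, dvd_neg]; exact ha.2.1
      · rw [sum_add, ha.2.2, sum_one]; decide
    · intro a ha
      rw [Finset.mem_filter] at ha ⊢
      refine ⟨h.compl a ha.1, ?_, ?_⟩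
      · rw [M_add_one, dvd_neg]; exact ha.2.1
      · rw [sum_add, sum_one]; exact z1 _ ha.2.2
    · intro a _; exact hoo a
    · intro a _; exact hoo a
  omega

lemma finrank_S (h : Good F) (h0 : 0 ∈ F) : Module.finrank (ZMod 2) (h.SS h0) = 4 := by
  have h1 : Nat.card (h.SS h0) = 16 := by
    rw [← h.card_S h0, ← Nat.card_eq_finsetCard]
    refine Nat.card_congr (Equiv.subtypeEquivRight (fun x => ?_))
    rw [Finset.mem_filter]; rfl
  have h2 := Module.natCard_eq_pow_finrank (K := ZMod 2) (V := h.SS h0)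
  rw [h1, Nat.card_zmod] at h2
  have : (2:ℕ)^4 = 2 ^ Module.finrank (ZMod 2) (h.SS h0) := by rw [← h2]; norm_num
  exact (Nat.pow_right_injective le_rfl this).symm

lemma theta_S (h : Good F) (h0 : 0 ∈ F) (w : V) (hw : w ∈ h.SS h0) (hne : w ≠ 0) : theta w = -1 := by
  obtain ⟨h1, h2, h3⟩ := hw
  have hone : w ≠ one := by
    rintro rfl; rw [sum_one] at h3; exact absurd h3 (by decide)
  have hv := h.Mval' h1 h0 hne (by rwa [zero_add])
  rw [add_zero] at hv
  have hM : M w = 0 := by omega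
  have h4 : chi one w = 1 := by
    unfold chi
    have : ∑ i, one i * w i = 0 := by rw [← h3]; exact Finset.sum_congr rfl (fun i _ => one_mul _)
    rw [this, sg_zero]
  have := M_eq w
  omega

theorem exists_norm (h : Good F) (h0 : 0 ∈ F) :
    ∃ σ : Equiv.Perm (Fin 15), Norm (F.image (fun c => (fun i => c (σ i) : V))) := by
  let b := Module.finBasisOfFinrankEq (ZMod 2) (h.SS h0) (h.finrank_S h0)
  have hsurj : ∀ x : W, x ≠ 0 → ∃ i : Fin 15, ∀ j, (b j : V) i = x j := by
    intro x hx
    by_contra hcon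
    have t0 : ∑ i : Fin 15, ∑ l : W, sg (ip l (x + fun j => (b j : V) i)) = 0 := by
      refine Finset.sum_eq_zero (fun i _ => sum_ip _ ?_)
      intro hz
      apply hcon
      refine ⟨i, fun j => ?_⟩
      have := congrFun hz j
      have z1 : ∀ a c : ZMod 2, a + c = 0 → c = a := by decide
      exact z1 _ _ this
    rw [Finset.sum_comm] at t0
    have t1 : ∀ l : W, ∑ i : Fin 15, sg (ip l (x + fun j => (b j : V) i)) =
        - sg (ip l x) + (if l = 0 then 16 else 0) := by
      intro l
      have t2 : ∑ i : Fin 15, sg (ip l (x + fun j => (b j : V) i)) =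
          sg (ip l x) * theta ((∑ j, l j • b j : h.SS h0) : V) := by
        unfold theta
        rw [Finset.mul_sum]
        refine Finset.sum_congr rfl (fun i _ => ?_)
        rw [ip_add, sg_add]
        refine congrArg (fun t => sg (ip l x) * sg t) ?_
        unfold ip
        simp [Finset.sum_apply]
      rw [t2]
      by_cases hl : l = 0
      · subst hl
        have : theta (0 : V) = 15 := by rw [theta_wt, CR.wt_eq_zero.2 rfl]; norm_num
        simp [this, ip, sg_zero]
      · rw [h.theta_S h0 _ (Subtype.mem _), if_neg hl]
        · ring
        · intro hz
          apply hl
          have hz' : (∑ j, l j • b j : h.SS h0) = 0 := Subtype.ext hz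
          funext j
          exact Fintype.linearIndependent_iff.1 b.linearIndependent l hz' j
    simp only [t1, Finset.sum_add_distrib, Finset.sum_neg_distrib] at t0
    rw [sum_ip x hx] at t0
    simp at t0
  choose s hs using fun i : Fin 15 => hsurj (fun j => X j i) (X_ne i)
  have hinj : Function.Injective s := by
    intro i i' hii
    apply X_inj
    intro j
    have e1 := hs i j
    have e2 := hs i' j
    rw [hii] at e1
    exact e1.symm.trans e2
  let σ : Equiv.Perm (Fin 15) := Equiv.ofBijective s (Finite.injective_iff_bijective.1 hinj)
  have hσ : ∀ i j, (b j : V) (σ i) = X j i := hs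
  refine ⟨σ, ?_⟩
  have himg : ∀ x, x ∈ F.image (fun c => (fun i => c (σ i) : V)) ↔ ∃ c ∈ F, (fun i => c (σ i)) = x := by
    intro x; rw [Finset.mem_image]
  constructor
  · rw [himg]; exact ⟨0, h0, rfl⟩
  · rw [Finset.card_image_of_injective, h.card]
    intro c d hcd
    funext i
    have := congrFun hcd (σ.symm i)
    simpa using this
  · intro x hx y hy hxy
    obtain ⟨c, hc, rfl⟩ := (himg x).1 hx
    obtain ⟨d, hd, rfl⟩ := (himg y).1 hy
    have h1 : wt ((fun i => c (σ i)) + (fun i => d (σ i)) : V) = wt (c + d) := wt_perm σ (c + d)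
    rw [h1]
    have h2 := h.dist c hc d hd
    have : wt (c + d) ≠ 0 := by
      intro hz
      apply hxy
      rw [eq_of_add (CR.wt_eq_zero.1 hz)]
    omega
  · intro x hx
    obtain ⟨c, hc, rfl⟩ := (himg x).1 hx
    exact (himg _).2 ⟨c + one, h.compl c hc, rfl⟩
  · intro x hx j
    obtain ⟨c, hc, rfl⟩ := (himg x).1 hx
    refine (himg _).2 ⟨c + b j, h.add_mem h0 hc (b j).2.1 (b j).2.2.1, ?_⟩
    funext i
    show c (σ i) + (b j : V) (σ i) = c (σ i) + X j i
    rw [hσ]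
  · intro x hx j
    obtain ⟨c, hc, rfl⟩ := (himg x).1 hx
    have h1 := h.orth h0 hc (b j).2.1 (b j).2.2.1 (b j).2.2.2
    rw [← h1, ← Equiv.sum_comp σ (fun i => c i * (b j : V) i)]
    refine Finset.sum_congr rfl (fun i _ => ?_)
    rw [hσ]

end Good
end NR

namespace NR

def bz (b : Bool) : ZMod 2 := if b then 1 else 0
lemma bz_xor (a b : Bool) : bz (a ^^ b) = bz a + bz b := by revert a b; decide
lemma bz_inj (a : Bool) : bz a ≠ 0 ↔ a = true := by revert a; decide

/-- vector given by a bit mask -/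
def vec (n : ℕ) : V := fun i => bz (n.testBit i.val)
lemma vec_xor (m n : ℕ) : vec (m ^^^ n) = vec m + vec n := by
  funext i
  show bz _ = bz _ + bz _
  rw [Nat.testBit_xor, bz_xor]
lemma vec_zero : vec 0 = 0 := by
  funext i; simp [vec, bz]

def pc (m : ℕ) : ℕ := ∑ i : Fin 15, (m.testBit i.val).toNat
lemma wt_vec (m : ℕ) : wt (vec m) = pc m := by
  rw [← card_supp, Finset.card_filter]
  unfold pc
  refine Finset.sum_congr rfl (fun i _ => ?_)
  unfold vec
  cases m.testBit i.val <;> simp [bz]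

def gx (b : Bool) (g : ℕ) : ℕ := if b then g else 0
lemma gx_xor (a b : Bool) (g : ℕ) : gx (a ^^ b) g = gx a g ^^^ gx b g := by
  cases a <;> cases b <;> simp [gx]

/-- representatives of the quadratic forms -/
def rq (a : ℕ) : ℕ :=
  gx (a.testBit 0) 17476 ^^^ (gx (a.testBit 1) 20560 ^^^ (gx (a.testBit 2) 21760 ^^^
  (gx (a.testBit 3) 24672 ^^^ (gx (a.testBit 4) 26112 ^^^ gx (a.testBit 5) 30720))))
/-- affine functions -/
def rk (a : ℕ) : ℕ :=
  gx (a.testBit 0) 32767 ^^^ (gx (a.testBit 1) 21845 ^^^ (gx (a.testBit 2) 26214 ^^^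
  (gx (a.testBit 3) 30840 ^^^ gx (a.testBit 4) 32640)))

lemma rq_xor (a b : ℕ) : rq (a ^^^ b) = rq a ^^^ rq b := by
  unfold rq
  simp only [Nat.testBit_xor, gx_xor]
  ac_rfl
lemma rk_xor (a b : ℕ) : rk (a ^^^ b) = rk a ^^^ rk b := by
  unfold rk
  simp only [Nat.testBit_xor, gx_xor]
  ac_rfl
lemma rq_zero : rq 0 = 0 := by decide
lemma rk_zero : rk 0 = 0 := by decide

lemma vec_one : vec 32767 = one := by
  funext i
  revert i; decide +kernel
lemma vec_X : vec 21845 = X 0 ∧ vec 26214 = X 1 ∧ vec 30840 = X 2 ∧ vec 32640 = X 3 := by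
  refine ⟨?_, ?_, ?_, ?_⟩ <;> (funext i; revert i; decide +kernel)

lemma vgx (b : Bool) (g : ℕ) : vec (gx b g) = if b then vec g else 0 := by
  cases b <;> simp [gx, vec_zero]

/-- The parity check splitting masks -/
def hm (i : ℕ) : ℕ :=
  2 ^ i ^^^ (gx ((i + 1).testBit 0) 1 ^^^ (gx ((i + 1).testBit 1) 2 ^^^
    (gx ((i + 1).testBit 2) 8 ^^^ gx ((i + 1).testBit 3) 128)))

lemma hm_span : ∀ i < 15, ∃ a < 64, ∃ k < 32, hm i = rq a ^^^ rk k := by decide +kernel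

lemma hm_e : ∀ i i' : Fin 15, e i i' = vec (hm i) i' + (X 0 i * vec 1 i' + X 1 i * vec 2 i' +
    X 2 i * vec 8 i' + X 3 i * vec 128 i') := by
  intro i i'
  have : e i i' = if i' = i then 1 else 0 := by simp [e, Pi.single_apply]
  rw [this]
  revert i i'; decide +kernel

def Sp (v : V) : Prop := ∃ a < 64, ∃ k < 32, v = vec (rq a ^^^ rk k)

lemma Sp_add {v w : V} (hv : Sp v) (hw : Sp w) : Sp (v + w) := by
  obtain ⟨a, ha, k, hk, rfl⟩ := hv
  obtain ⟨b, hb, l, hl, rfl⟩ := hw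
  refine ⟨a ^^^ b, Nat.xor_lt_two_pow (n := 6) ha hb, k ^^^ l, Nat.xor_lt_two_pow (n := 5) hk hl, ?_⟩
  rw [rq_xor, rk_xor, ← vec_xor]
  refine congrArg vec ?_
  ac_rfl

lemma Sp_zero : Sp 0 := ⟨0, by norm_num, 0, by norm_num, by rw [rq_zero, rk_zero]; exact vec_zero.symm⟩

lemma Sp_of_orth (c : V) (h : ∀ j, ∑ i, c i * X j i = 0) : Sp c := by
  have h1 : c = ∑ i, (fun i' => c i * vec (hm i) i' : V) := by
    funext i'
    have h2 : c i' = ∑ i, c i * e i i' := by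
      simp [e, Pi.single_apply]
    rw [h2, Finset.sum_apply]
    have h3 : ∀ i, c i * e i i' = c i * vec (hm i) i' + ((c i * X 0 i) * vec 1 i' + (c i * X 1 i) * vec 2 i' +
        (c i * X 2 i) * vec 8 i' + (c i * X 3 i) * vec 128 i') := by
      intro i; rw [hm_e]; ring
    simp only [h3, Finset.sum_add_distrib, ← Finset.sum_mul]
    rw [h 0, h 1, h 2, h 3]; ring
  rw [h1]
  refine Finset.sum_induction _ Sp (fun _ _ => Sp_add) Sp_zero (fun i _ => ?_)
  have : c i = 0 ∨ c i = 1 := by generalize c i = a; revert a; decide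
  rcases this with h0 | h0 <;> rw [h0]
  · simp only [zero_mul]; exact Sp_zero
  · simp only [one_mul]
    obtain ⟨a, ha, k, hk, hak⟩ := hm_span i.val i.isLt
    exact ⟨a, ha, k, hk, congrArg vec hak⟩

/-- mask of nondegenerate forms -/
def isB (d : ℕ) : Bool :=
  [12, 13, 14, 15, 18, 19, 22, 23, 26, 27, 28, 29, 33, 35, 37, 39, 41, 43, 44, 46, 49, 50, 53, 54,
    57, 58, 60, 63].contains d

def star (p : ℕ) : List ℕ :=
  [[0, 12, 22, 27, 39, 41, 53, 58], [0, 12, 23, 26, 37, 43, 54, 57], [0, 13, 22, 26, 35, 44, 49, 63],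
   [0, 13, 23, 27, 33, 46, 50, 60], [0, 14, 18, 29, 39, 43, 49, 60], [0, 14, 19, 28, 37, 41, 50, 63],
   [0, 15, 18, 28, 35, 46, 53, 57], [0, 15, 19, 29, 33, 44, 54, 58]].getD p []

def permN (p i : ℕ) : ℕ :=
  ([1070935975390360080, 1003117063370453520, 918409395049869840, 543154130895778320,
   610973042915684880, 695680711236268560, 763499623256175120, 850590483029963280].getD p 0
    >>> (4 * i)) % 16

lemma permN_lt : ∀ p < 8, ∀ i < 15, permN p i < 15 := by decide +kernel
lemma permN_inj : ∀ p < 8, ∀ i < 15, ∀ j < 15, permN p i = permN p j → i = j := by decide +kernel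

lemma isB_spec : ∀ d < 64, d = 0 ∨ isB d = true ∨ ∃ k < 32, pc (rq d ^^^ rk k) ≠ 0 ∧ pc (rq d ^^^ rk k) < 5 := by
  decide +kernel

def tst (a b p c : ℕ) : Bool :=
  !(isB c && isB (a ^^^ c) && isB (b ^^^ c) && c != a ^^^ b) || ((star p).contains c && !isB ((a ^^^ b) ^^^ c))

def tst2 (a b : ℕ) : Bool :=
  !(isB a && isB b && isB (a ^^^ b)) || (List.range 8).any (fun p => (star p).contains a && (star p).contains b &&
    (List.range 64).all (tst a b p))

lemma tst2_spec : ∀ a < 64, ∀ b < 64, tst2 a b = true := by decide +kernel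

lemma star_spec (a : ℕ) (ha : a < 64) (hBa : isB a = true) (b : ℕ) (hb : b < 64) (hBb : isB b = true)
    (hab : isB (a ^^^ b) = true) :
    ∃ p < 8, a ∈ star p ∧ b ∈ star p ∧ ∀ c < 64, isB c = true → isB (a ^^^ c) = true → isB (b ^^^ c) = true →
      c ≠ a ^^^ b → c ∈ star p ∧ isB ((a ^^^ b) ^^^ c) = false := by
  have h := tst2_spec a ha b hb
  unfold tst2 at h
  rw [hBa, hBb, hab] at h
  simp only [Bool.and_self, Bool.not_true, Bool.false_or, List.any_eq_true, List.mem_range, Bool.and_eq_true,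
    List.contains_iff_mem, List.all_eq_true] at h
  obtain ⟨p, hp, ⟨h1, h2⟩, h3⟩ := h
  refine ⟨p, hp, h1, h2, fun c hc hBc hac hbc hne => ?_⟩
  have h4 := h3 c hc
  unfold tst at h4
  rw [hBc, hac, hbc, bne_iff_ne.2 hne] at h4
  simpa using h4

lemma star_zero : ∀ p < 8, 0 ∈ star p := by decide

lemma perm_q : ∀ p < 8, ∀ a ∈ star p, ∃ a' ∈ star 0, ∃ k < 32, ∀ i < 15,
    (rq a).testBit (permN p i) = (rq a' ^^^ rk k).testBit i := by decide +kernel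
lemma perm_k : ∀ p < 8, ∀ k < 32, ∃ k' < 32, ∀ i < 15,
    (rk k).testBit (permN p i) = (rk k').testBit i := by decide +kernel

end NR

namespace NR

/-- the standard code -/
def C0 : Finset V :=
  ((star 0).toFinset ×ˢ Finset.range 32).image (fun q => vec (rq q.1 ^^^ rk q.2))

lemma C0_card : C0.card ≤ 256 := by
  refine Finset.card_image_le.trans ?_
  rw [Finset.card_product, Finset.card_range]
  have : (star 0).toFinset.card ≤ 8 := List.toFinset_card_le _
  omega

lemma mem_C0 {a k : ℕ} (ha : a ∈ star 0) (hk : k < 32) : vec (rq a ^^^ rk k) ∈ C0 := by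
  refine Finset.mem_image.2 ⟨(a, k), ?_, rfl⟩
  rw [Finset.mem_product]
  exact ⟨List.mem_toFinset.2 ha, Finset.mem_range.2 hk⟩

noncomputable def permE (p : ℕ) (hp : p < 8) : Equiv.Perm (Fin 15) :=
  Equiv.ofBijective (fun i => (⟨permN p i.val, permN_lt p hp i.val i.isLt⟩ : Fin 15))
    (Finite.injective_iff_bijective.1 (fun i j hij => by
      have h1 : permN p i.val = permN p j.val := congrArg Fin.val hij
      exact Fin.ext (permN_inj p hp i.val i.isLt j.val j.isLt h1)))

lemma permE_val (p : ℕ) (hp : p < 8) (i : Fin 15) : (permE p hp i).val = permN p i.val := rfl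

lemma vec_perm {p : ℕ} (hp : p < 8) {m m' : ℕ} (h : ∀ i < 15, m.testBit (permN p i) = m'.testBit i) :
    (fun i => vec m (permE p hp i)) = vec m' := by
  funext i
  unfold vec
  rw [permE_val, h i.val i.isLt]

namespace Norm
variable {C : Finset V}

lemma addK (h : Norm C) {c : V} (hc : c ∈ C) (k : ℕ) : c + vec (rk k) ∈ C := by
  obtain ⟨x0, x1, x2, x3⟩ := vec_X
  unfold rk
  rw [vec_xor, vec_xor, vec_xor, vec_xor, vgx, vgx, vgx, vgx, vgx, x0, x1, x2, x3, vec_one]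
  rw [← add_assoc, ← add_assoc, ← add_assoc, ← add_assoc]
  have h1 : ∀ (b : Bool) (c : V), c ∈ C → c + (if b then one else 0) ∈ C := by
    intro b c hc
    cases b
    · simpa using hc
    · simpa using h.addone c hc
  have h2 : ∀ (b : Bool) (j : Fin 4) (c : V), c ∈ C → c + (if b then X j else 0) ∈ C := by
    intro b j c hc
    cases b
    · simpa using hc
    · simpa using h.addX c hc j
  exact h2 _ _ _ (h2 _ _ _ (h2 _ _ _ (h2 _ _ _ (h1 _ _ hc))))

lemma vv (c d : V) : c + d + d = c := by rw [add_assoc, v2, add_zero]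

/-- quadratic parts occurring in the code -/
def A (C : Finset V) : Finset ℕ := (Finset.range 64).filter (fun a => vec (rq a) ∈ C)

lemma mem_A {a : ℕ} : a ∈ A C ↔ a < 64 ∧ vec (rq a) ∈ C := by
  unfold A; rw [Finset.mem_filter, Finset.mem_range]

lemma decomp (h : Norm C) {c : V} (hc : c ∈ C) : ∃ a ∈ A C, ∃ k < 32, c = vec (rq a ^^^ rk k) := by
  obtain ⟨a, ha, k, hk, rfl⟩ := Sp_of_orth c (h.orth c hc)
  refine ⟨a, mem_A.2 ⟨ha, ?_⟩, k, hk, rfl⟩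
  have := h.addK hc k
  rwa [vec_xor, vv] at this

lemma A_card (h : Norm C) : 8 ≤ (A C).card := by
  have h1 : C ⊆ (A C ×ˢ Finset.range 32).image (fun q => vec (rq q.1 ^^^ rk q.2)) := by
    intro c hc
    obtain ⟨a, ha, k, hk, rfl⟩ := h.decomp hc
    refine Finset.mem_image.2 ⟨(a, k), ?_, rfl⟩
    rw [Finset.mem_product]
    exact ⟨ha, Finset.mem_range.2 hk⟩
  have h2 := (Finset.card_le_card h1).trans Finset.card_image_le
  rw [Finset.card_product, Finset.card_range, h.card] at h2
  omega

lemma A_B (h : Norm C) {a b : ℕ} (ha : a ∈ A C) (hb : b ∈ A C) (hab : a ≠ b) : isB (a ^^^ b) = true := by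
  obtain ⟨a1, a2⟩ := mem_A.1 ha
  obtain ⟨b1, b2⟩ := mem_A.1 hb
  rcases isB_spec (a ^^^ b) (Nat.xor_lt_two_pow (n := 6) a1 b1) with h0 | h0 | ⟨k, hk, h0, h5⟩
  · exact absurd (Nat.xor_eq_zero_iff.1 h0) hab
  · exact h0
  · exfalso
    have e1 : vec (rq (a ^^^ b) ^^^ rk k) = (vec (rq a) + vec (rk k)) + vec (rq b) := by
      rw [rq_xor, vec_xor, vec_xor]; abel
    rw [← wt_vec, e1] at h0 h5
    have hne : vec (rq a) + vec (rk k) ≠ vec (rq b) := by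
      intro he
      rw [he, v2] at h0
      exact h0 (CR.wt_eq_zero.2 rfl)
    have := h.dist _ (h.addK a2 k) _ b2 hne
    omega

lemma zero_A (h : Norm C) : 0 ∈ A C :=
  mem_A.2 ⟨by norm_num, by rw [rq_zero, vec_zero]; exact h.zero⟩

lemma A_B0 (h : Norm C) {a : ℕ} (ha : a ∈ A C) (h0 : a ≠ 0) : isB a = true := by
  have := h.A_B ha h.zero_A h0
  rwa [Nat.xor_zero] at this

lemma pick {S : Finset ℕ} (T : List ℕ) (h : T.length < S.card) : ∃ c ∈ S, c ∉ T := by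
  by_contra hcon
  have : S ⊆ T.toFinset := by
    intro c hc
    by_contra hc'
    exact hcon ⟨c, hc, fun hT => hc' (List.mem_toFinset.2 hT)⟩
  have := Finset.card_le_card this
  have := List.toFinset_card_le T
  omega

lemma A_star (h : Norm C) : ∃ p < 8, ∀ a ∈ A C, a ∈ star p := by
  have hA := h.A_card
  obtain ⟨a, ha, ha'⟩ := pick (S := A C) [0] (by simp; omega)
  obtain ⟨b, hb, hb'⟩ := pick (S := A C) [0, a] (by simp; omega)
  obtain ⟨c, hc, hc'⟩ := pick (S := A C) [0, a, b, a ^^^ b] (by simp; omega)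
  simp only [List.mem_cons, List.not_mem_nil, or_false, not_or] at ha' hb' hc'
  obtain ⟨p, hp, p1, p2, p3⟩ := star_spec a (mem_A.1 ha).1 (h.A_B0 ha ha') b (mem_A.1 hb).1
    (h.A_B0 hb hb'.1) (h.A_B ha hb (Ne.symm hb'.2))
  refine ⟨p, hp, fun d hd => ?_⟩
  by_cases d0 : d = 0
  · subst d0; exact star_zero p hp
  by_cases d1 : d = a
  · subst d1; exact p1
  by_cases d2 : d = b
  · subst d2; exact p2
  have d3 : d ≠ a ^^^ b := by
    intro d3
    have q := (p3 c (mem_A.1 hc).1 (h.A_B0 hc hc'.1) (h.A_B ha hc (Ne.symm hc'.2.1))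
      (h.A_B hb hc (Ne.symm hc'.2.2.1)) hc'.2.2.2).2
    rw [d3] at hd
    rw [h.A_B hd hc (Ne.symm hc'.2.2.2)] at q
    exact absurd q (by decide)
  exact (p3 d (mem_A.1 hd).1 (h.A_B0 hd d0) (h.A_B ha hd (Ne.symm d1)) (h.A_B hb hd (Ne.symm d2)) d3).1

theorem std (h : Norm C) : ∃ σ : Equiv.Perm (Fin 15), C.image (fun c => (fun i => c (σ i) : V)) = C0 := by
  obtain ⟨p, hp, hA⟩ := h.A_star
  refine ⟨permE p hp, Finset.eq_of_subset_of_card_le ?_ ?_⟩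
  · intro x hx
    obtain ⟨c, hc, rfl⟩ := Finset.mem_image.1 hx
    obtain ⟨a, ha, k, hk, rfl⟩ := h.decomp hc
    obtain ⟨a', ha', l, hl, e1⟩ := perm_q p hp a (hA a ha)
    obtain ⟨k', hk', e2⟩ := perm_k p hp k hk
    have e3 : (fun i => vec (rq a ^^^ rk k) (permE p hp i)) = vec (rq a' ^^^ rk (l ^^^ k')) := by
      rw [rk_xor, ← Nat.xor_assoc, vec_xor, vec_xor, ← vec_perm hp e1, ← vec_perm hp e2]
      rfl
    show (fun i => vec (rq a ^^^ rk k) (permE p hp i)) ∈ C0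
    rw [e3]
    exact mem_C0 ha' (Nat.xor_lt_two_pow (n := 5) hl hk')
  · rw [Finset.card_image_of_injective, h.card]
    · exact C0_card
    · intro c d hcd
      funext i
      have := congrFun hcd ((permE p hp).symm i)
      simpa using this

end Norm

lemma Good.translate {F : Finset V} (h : Good F) (v : V) : Good (F.image (fun c => c + v)) := by
  have hinj : Function.Injective (fun c : V => c + v) := fun a b hab => add_right_cancel hab
  constructor
  · rw [Finset.card_image_of_injective _ hinj, h.card]
  · intro x hx y hy
    obtain ⟨c, hc, rfl⟩ := Finset.mem_image.1 hx
    obtain ⟨d, hd, rfl⟩ := Finset.mem_image.1 hy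
    have : c + v + (d + v) = c + d := by
      rw [add_add_add_comm, v2, add_zero]
    rw [this]; exact h.dist c hc d hd
  · intro x hx
    obtain ⟨c, hc, rfl⟩ := Finset.mem_image.1 hx
    exact Finset.mem_image.2 ⟨c + one, h.compl c hc, add_right_comm _ _ _⟩
  · intro u hu hth
    rw [Finset.sum_image (fun a _ b _ hab => hinj hab)]
    have h1 : ∀ c : V, sg (∑ i, u i * (c + v) i) = chi u c * chi u v := fun c => chi_add u c v
    simp only [h1]
    rw [← Finset.sum_mul]
    have h2 : ∑ c ∈ F, chi u c = 0 := h.char u hu hth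
    rw [h2, zero_mul]

/-- every good code is a translated and permuted standard code -/
theorem Good.equiv {F : Finset V} (h : Good F) : ∃ (τ : Equiv.Perm (Fin 15)) (v : V),
    ∀ x : V, x ∈ F ↔ (fun i => (x + v) (τ i)) ∈ C0 := by
  have hne : F.Nonempty := by
    rw [← Finset.card_pos, h.card]; norm_num
  obtain ⟨v, hv⟩ := hne
  have h0 : (0 : V) ∈ F.image (fun c => c + v) := Finset.mem_image.2 ⟨v, hv, v2 v⟩
  obtain ⟨σ, hσ⟩ := (h.translate v).exists_norm h0
  obtain ⟨π, hπ⟩ := hσ.std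
  refine ⟨π.trans σ, v, fun x => ?_⟩
  rw [← hπ]
  constructor
  · intro hx
    refine Finset.mem_image.2 ⟨fun i => (x + v) (σ i), ?_, rfl⟩
    exact Finset.mem_image.2 ⟨x + v, Finset.mem_image.2 ⟨x, hx, rfl⟩, rfl⟩
  · intro hx
    obtain ⟨y, hy, hy'⟩ := Finset.mem_image.1 hx
    obtain ⟨z, hz, rfl⟩ := Finset.mem_image.1 hy
    obtain ⟨t, ht, rfl⟩ := Finset.mem_image.1 hz
    have : t = x := by
      funext i
      have h1 := congrFun hy' ((π.trans σ).symm i)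
      have h2 : (t + v) ((π.trans σ) ((π.trans σ).symm i)) = (x + v) ((π.trans σ) ((π.trans σ).symm i)) := h1
      rw [Equiv.apply_symm_apply] at h2
      exact add_right_cancel h2
    rwa [← this]

lemma cr_of (C : Set V) (hC : C.Nonempty) (hreg : IsCompletelyRegular C) (hd : IsMinDist C 5) :
    ∃ F : Finset V, (∀ x, x ∈ F ↔ x ∈ C) ∧ Good F := by
  classical
  have hmem : ∀ x, x ∈ (Set.toFinite C).toFinset ↔ x ∈ C := fun x => Set.Finite.mem_toFinset _
  refine ⟨(Set.toFinite C).toFinset, hmem, ?_⟩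
  refine CR.good (D := distToCode C) ?_
  have hN : ∀ k x, N (Set.toFinite C).toFinset k x = {c ∈ C | hammingDist x c = k}.ncard := by
    intro k x
    unfold N
    rw [← Set.ncard_coe_finset]
    refine congrArg Set.ncard ?_
    ext c
    rw [Finset.mem_coe, Finset.mem_filter, hmem, ← dist_eq]; rfl
  constructor
  · intro x hx y hy hxy
    rw [← dist_eq]
    exact hd.1 x ((hmem x).1 hx) y ((hmem y).1 hy) hxy
  · obtain ⟨x, hx, y, hy, -, h5⟩ := hd.2
    exact ⟨x, (hmem x).2 hx, y, (hmem y).2 hy, by rw [← dist_eq]; exact h5⟩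
  · intro x y hxy k
    rw [hN, hN]
    exact hreg x y hxy k
  · intro x
    obtain ⟨c0, hc0⟩ := hC
    have : distToCode C x ∈ {d | ∃ c ∈ C, hammingDist x c = d} := Nat.sInf_mem ⟨_, c0, hc0, rfl⟩
    obtain ⟨c, hc, h1⟩ := this
    exact ⟨c, (hmem c).2 hc, by rw [← dist_eq]; exact h1⟩
  · intro x c hc
    rw [← dist_eq]
    exact Nat.sInf_le ⟨c, (hmem c).1 hc, rfl⟩

end NR

/-- Any two binary completely regular codes of length 15 with minimum distance 5
are equivalent (both are equivalent to the punctured Nordstrom-Robinson code). -/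
theorem stmt_1 (C C' : Set (Fin 15 → ZMod 2)) (hC : C.Nonempty) (hC' : C'.Nonempty)
    (hreg : IsCompletelyRegular C) (hreg' : IsCompletelyRegular C')
    (hd : IsMinDist C 5) (hd' : IsMinDist C' 5) :
    ∃ (σ : Equiv.Perm (Fin 15)) (v : Fin 15 → ZMod 2),
      C' = (fun α => (fun i => α (σ.symm i)) + v) '' C := by
  obtain ⟨F, hF, gF⟩ := NR.cr_of C hC hreg hd
  obtain ⟨F', hF', gF'⟩ := NR.cr_of C' hC' hreg' hd'
  obtain ⟨τ, v, h1⟩ := gF.equiv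
  obtain ⟨τ', v', h2⟩ := gF'.equiv
  have k1 : ∀ x, x ∈ C ↔ (fun i => (x + v) (τ i)) ∈ NR.C0 := fun x => (hF x).symm.trans (h1 x)
  have k2 : ∀ x, x ∈ C' ↔ (fun i => (x + v') (τ' i)) ∈ NR.C0 := fun x => (hF' x).symm.trans (h2 x)
  have zz : ∀ a b : ZMod 2, a + b + b = a := by decide
  refine ⟨τ.symm.trans τ', fun i => v (τ (τ'.symm i)) + v' i, ?_⟩
  ext y
  constructor
  · intro hy
    refine ⟨fun i => (y + v') (τ' (τ.symm i)) + v i, ?_, ?_⟩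
    · rw [k1]
      have : (fun i => ((fun i => (y + v') (τ' (τ.symm i)) + v i) + v) (τ i)) = fun i => (y + v') (τ' i) := by
        funext i
        show (y + v') (τ' (τ.symm (τ i))) + v (τ i) + v (τ i) = _
        rw [zz, Equiv.symm_apply_apply]
      rw [this]
      exact (k2 y).1 hy
    · funext i
      show (y (τ' (τ.symm (τ (τ'.symm i)))) + v' (τ' (τ.symm (τ (τ'.symm i))))) + v (τ (τ'.symm i))
        + (v (τ (τ'.symm i)) + v' i) = y i
      rw [Equiv.symm_apply_apply, Equiv.apply_symm_apply, ← add_assoc, zz, zz]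
  · rintro ⟨x, hx, rfl⟩
    rw [k2]
    have : (fun i => ((fun i => x ((τ.symm.trans τ').symm i)) + (fun i => v (τ (τ'.symm i)) + v' i) + v') (τ' i))
        = fun i => (x + v) (τ i) := by
      funext i
      show x (τ (τ'.symm (τ' i))) + (v (τ (τ'.symm (τ' i))) + v' (τ' i)) + v' (τ' i) = x (τ i) + v (τ i)
      rw [Equiv.symm_apply_apply, ← add_assoc, zz]
    exact this ▸ (k1 x).1 hx
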